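/- arXiv:1605.04193 — 4 statements merged into one kernel-verified Lean document; each statement's English description precedes it below -/
import Mathlib

section
/- Let R > 0, B > 0 and let m ≥ 0 be an integer, and define v_m(r) := r^m ( e^{B(R²−r²)/(4h)} − e^{B(r²−R²)/(4h)} ). Then there exist constants C > 0 and h₀ > 0 such that for all 0 < h < h₀: | ∫₀^R v_m(r)² r dr − 2^m · m! · (h/B)^{m+1} e^{BR²/(2h)} | ≤ C; that is, ∫₀^R v_m(r)² r dr = 2^m m! (h/B)^{m+1} e^{BR²/(2h)} + O(1) as h → 0⁺. -/
open MeasureTheory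

noncomputable section

open Set Real

/-!
With `a = B / (2h)`, the integrand `v_s(r)² r` is
`r^(2s+1) e^{a(R²-r²)} + r^(2s+1) (e^{-a(R²-r²)} - 2)`, and the second term is at most
`2 r^(2s+1)` in absolute value on `(0, R)`, hence contributes `O(1)`. The integral of the first
term over `(0, ∞)` is a Gamma integral, equal to the main term. Passing from `(0, ∞)` to `(0, R)`
removes the tail over `(R, ∞)`, where `e^{a(R²-r²)}` is decreasing in `a`: the tail is bounded by
its value at any smaller parameter `a₀`.
-/

section GaussianMoments

variable {q a : ℝ}

lemma exp_mul_sub_sq_eq (a c r : ℝ) : exp (a * (c - r ^ 2)) = exp (a * c) * exp (-a * r ^ 2) := by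
  rw [← exp_add]
  ring_nf

lemma integrableOn_Ioi_rpow_mul_exp_mul_sub_sq (hq : -1 < q) (ha : 0 < a) (c : ℝ) :
    IntegrableOn (fun r ↦ r ^ q * exp (a * (c - r ^ 2))) (Ioi 0) := by
  simp only [exp_mul_sub_sq_eq a c, mul_left_comm _ (exp (a * c))]
  exact (integrableOn_rpow_mul_exp_neg_mul_sq ha hq).const_mul _

lemma integral_Ioi_rpow_mul_exp_mul_sub_sq (hq : -1 < q) (ha : 0 < a) (c : ℝ) :
    ∫ r in Ioi (0 : ℝ), r ^ q * exp (a * (c - r ^ 2)) =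
      a ^ (-((q + 1) / 2)) / 2 * Gamma ((q + 1) / 2) * exp (a * c) := by
  have gamma_integral : ∫ r in Ioi (0 : ℝ), r ^ q * exp (-a * r ^ 2) =
      a ^ (-((q + 1) / 2)) * (1 / 2) * Gamma ((q + 1) / 2) := by
    simpa only [rpow_two, neg_div] using integral_rpow_mul_exp_neg_mul_rpow two_pos hq ha
  simp only [exp_mul_sub_sq_eq a c, mul_left_comm _ (exp (a * c)), integral_const_mul,
    gamma_integral]
  ring

lemma setIntegral_Ioi_rpow_mul_exp_mul_sub_sq_nonneg {R : ℝ} (q a c : ℝ) (hR : 0 ≤ R) :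
    0 ≤ ∫ r in Ioi R, r ^ q * exp (a * (c - r ^ 2)) :=
  setIntegral_nonneg measurableSet_Ioi fun r (hr : R < r) ↦
    mul_nonneg (rpow_nonneg (hR.trans hr.le) q) (exp_pos _).le

lemma setIntegral_Ioi_rpow_mul_exp_mul_sub_sq_le_of_le {a₀ R : ℝ} (hq : -1 < q)
    (ha₀ : 0 < a₀) (ha : a₀ ≤ a) (hR : 0 ≤ R) :
    ∫ r in Ioi R, r ^ q * exp (a * (R ^ 2 - r ^ 2)) ≤
      ∫ r in Ioi R, r ^ q * exp (a₀ * (R ^ 2 - r ^ 2)) := by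
  have integrable {b : ℝ} (hb : 0 < b) :
      IntegrableOn (fun r ↦ r ^ q * exp (b * (R ^ 2 - r ^ 2))) (Ioi R) :=
    (integrableOn_Ioi_rpow_mul_exp_mul_sub_sq hq hb _).mono_set (Ioi_subset_Ioi hR)
  refine setIntegral_mono_on (integrable (ha₀.trans_le ha)) (integrable ha₀) measurableSet_Ioi
    fun r (hr : R < r) ↦ ?_
  have exponent_nonpos : R ^ 2 - r ^ 2 ≤ 0 := sub_nonpos.2 (pow_le_pow_left₀ hR hr.le 2)
  have exponent_le := mul_le_mul_of_nonpos_right ha exponent_nonpos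
  have := hR.trans hr.le
  gcongr

lemma abs_setIntegral_Ioo_rpow_mul_exp_mul_sub_sq_sub_le {a₀ R : ℝ} (hq : -1 < q) (ha₀ : 0 < a₀)
    (ha : a₀ ≤ a) (hR : 0 ≤ R) :
    |(∫ r in Ioo 0 R, r ^ q * exp (a * (R ^ 2 - r ^ 2))) -
        a ^ (-((q + 1) / 2)) / 2 * Gamma ((q + 1) / 2) * exp (a * R ^ 2)| ≤
      ∫ r in Ioi R, r ^ q * exp (a₀ * (R ^ 2 - r ^ 2)) := by
  have integrable := integrableOn_Ioi_rpow_mul_exp_mul_sub_sq hq (ha₀.trans_le ha) (R ^ 2)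
  rw [← integral_Ioc_eq_integral_Ioo, ← intervalIntegral.integral_of_le hR,
    ← integral_Ioi_rpow_mul_exp_mul_sub_sq hq (ha₀.trans_le ha),
    ← intervalIntegral.integral_Ioi_sub_Ioi integrable hR, sub_sub_cancel_left, abs_neg,
    abs_of_nonneg (setIntegral_Ioi_rpow_mul_exp_mul_sub_sq_nonneg q a _ hR)]
  exact setIntegral_Ioi_rpow_mul_exp_mul_sub_sq_le_of_le hq ha₀ ha hR

end GaussianMoments

section Remainder

variable {q R : ℝ}

lemma setIntegral_Ioo_rpow (hq : -1 < q) (hR : 0 ≤ R) :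
    ∫ r in Ioo 0 R, r ^ q = R ^ (q + 1) / (q + 1) := by
  rw [← integral_Ioc_eq_integral_Ioo, ← intervalIntegral.integral_of_le hR,
    integral_rpow (Or.inl hq), zero_rpow (by linarith), sub_zero]

lemma abs_exp_sub_two_le_two {x : ℝ} (hx : x ≤ 0) : |exp x - 2| ≤ 2 := by
  have := exp_pos x
  have := exp_le_one_iff.2 hx
  rw [abs_le]
  constructor <;> linarith

lemma abs_rpow_mul_exp_sub_two_le {a r : ℝ} (q : ℝ) (ha : 0 ≤ a) (hr : r ∈ Ioo 0 R) :
    |r ^ q * (exp (-(a * (R ^ 2 - r ^ 2))) - 2)| ≤ 2 * r ^ q := by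
  have sq_le : r ^ 2 ≤ R ^ 2 := pow_le_pow_left₀ hr.1.le hr.2.le 2
  have rpow_q_nonneg : 0 ≤ r ^ q := rpow_nonneg hr.1.le q
  rw [abs_mul, abs_of_nonneg rpow_q_nonneg, mul_comm]
  gcongr
  exact abs_exp_sub_two_le_two (neg_nonpos.2 (mul_nonneg ha (sub_nonneg.2 sq_le)))

lemma integrableOn_Ioo_rpow_mul_exp_sub_two {a : ℝ} (hq : -1 < q) (hR : 0 < R) (ha : 0 ≤ a) :
    IntegrableOn (fun r ↦ r ^ q * (exp (-(a * (R ^ 2 - r ^ 2))) - 2)) (Ioo 0 R) :=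
  Integrable.mono' (((intervalIntegral.integrableOn_Ioo_rpow_iff hR).2 hq).const_mul 2)
    (by fun_prop)
    (ae_restrict_of_forall_mem measurableSet_Ioo fun _ ↦ abs_rpow_mul_exp_sub_two_le q ha)

lemma abs_setIntegral_Ioo_rpow_mul_exp_sub_two_le {a : ℝ} (hq : -1 < q) (hR : 0 < R)
    (ha : 0 ≤ a) :
    |∫ r in Ioo 0 R, r ^ q * (exp (-(a * (R ^ 2 - r ^ 2))) - 2)| ≤
      2 * (R ^ (q + 1) / (q + 1)) := by
  rw [← setIntegral_Ioo_rpow hq hR.le, ← integral_const_mul, ← norm_eq_abs]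
  exact norm_integral_le_of_norm_le
    (((intervalIntegral.integrableOn_Ioo_rpow_iff hR).2 hq).const_mul 2)
    (ae_restrict_of_forall_mem measurableSet_Ioo fun _ ↦ abs_rpow_mul_exp_sub_two_le q ha)

end Remainder

/-- The radial profile `v_s` of the quasimode, with a real exponent `s` in place of `m`. It is
written in terms of the rescaled field `a = B / (2h)`, which makes the exponents of `v_s²` equal
to `± a (R² - r²)`. -/
def quasimode (R a s r : ℝ) : ℝ :=
  r ^ s * (exp (a * (R ^ 2 - r ^ 2) / 2) - exp (-(a * (R ^ 2 - r ^ 2) / 2)))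

lemma quasimode_div_two_mul (R B h s r : ℝ) :
    quasimode R (B / (2 * h)) s r =
      r ^ s * (exp (B * (R ^ 2 - r ^ 2) / (4 * h)) - exp (B * (r ^ 2 - R ^ 2) / (4 * h))) := by
  rw [quasimode]
  ring_nf

lemma quasimode_sq_mul_self {r : ℝ} (hr : 0 < r) (R a s : ℝ) :
    quasimode R a s r ^ 2 * r =
      r ^ (2 * s + 1) * exp (a * (R ^ 2 - r ^ 2)) +
        r ^ (2 * s + 1) * (exp (-(a * (R ^ 2 - r ^ 2))) - 2) := by
  have rpow_eq : r ^ (2 * s + 1) = (r ^ s) ^ 2 * r := by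
    rw [rpow_add_one hr.ne', two_mul, rpow_add hr, sq]
  obtain ⟨x, hx⟩ : ∃ x, a * (R ^ 2 - r ^ 2) = 2 * x := ⟨_, (mul_div_cancel₀ _ two_ne_zero).symm⟩
  have exp_two_mul (y : ℝ) : exp (2 * y) = exp y ^ 2 := mod_cast exp_nat_mul y 2
  have exp_mul_exp_neg : exp x * exp (-x) = 1 := by rw [← exp_add, add_neg_cancel, exp_zero]
  rw [quasimode, hx, mul_div_cancel_left₀ x two_ne_zero, rpow_eq, ← mul_neg, exp_two_mul,
    exp_two_mul]
  linear_combination -2 * (r ^ s) ^ 2 * r * exp_mul_exp_neg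

lemma two_rpow_mul_rpow_add_one {x : ℝ} (hx : 0 ≤ x) (s : ℝ) :
    2 ^ s * x ^ (s + 1) = (2 * x) ^ (s + 1) / 2 := by
  rw [mul_rpow zero_le_two hx, rpow_add_one two_ne_zero]
  ring

lemma abs_setIntegral_quasimode_sq_sub_le {R s a a₀ : ℝ} (hR : 0 < R) (hs : -1 < s)
    (ha₀ : 0 < a₀) (ha : a₀ ≤ a) :
    |(∫ r in Ioo 0 R, quasimode R a s r ^ 2 * r) -
        a ^ (-(s + 1)) / 2 * Gamma (s + 1) * exp (a * R ^ 2)| ≤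
      (∫ r in Ioi R, r ^ (2 * s + 1) * exp (a₀ * (R ^ 2 - r ^ 2))) +
        R ^ (2 * s + 2) / (s + 1) := by
  have hq : -1 < 2 * s + 1 := by linarith
  have ha_pos : 0 < a := ha₀.trans_le ha
  have main_le := abs_setIntegral_Ioo_rpow_mul_exp_mul_sub_sq_sub_le hq ha₀ ha hR.le
  have remainder_le := abs_setIntegral_Ioo_rpow_mul_exp_sub_two_le hq hR ha_pos.le
  have half_exponent : (2 * s + 1 + 1) / 2 = s + 1 := by ring
  have remainder_eq : 2 * (R ^ (2 * s + 1 + 1) / (2 * s + 1 + 1)) = R ^ (2 * s + 2) / (s + 1) := by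
    rw [← half_exponent, div_div_eq_mul_div, mul_comm _ (2 : ℝ), mul_div_assoc, add_assoc,
      one_add_one_eq_two]
  rw [half_exponent] at main_le
  rw [remainder_eq] at remainder_le
  rw [setIntegral_congr_fun measurableSet_Ioo fun r hr ↦ quasimode_sq_mul_self hr.1 R a s,
    integral_add
      ((integrableOn_Ioi_rpow_mul_exp_mul_sub_sq hq ha_pos _).mono_set Ioo_subset_Ioi_self)
      (integrableOn_Ioo_rpow_mul_exp_sub_two hq hR ha_pos.le), add_sub_right_comm]
  exact (abs_add_le _ _).trans (add_le_add main_le remainder_le)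

theorem stmt13_general {R B s : ℝ} (hR : 0 < R) (hB : 0 < B) (hs : -1 < s) (h₀ : ℝ) :
    ∃ C > 0, ∀ h : ℝ, 0 < h → h < h₀ →
      |(∫ r in Ioo 0 R,
            (r ^ s * (exp (B * (R ^ 2 - r ^ 2) / (4 * h))
              - exp (B * (r ^ 2 - R ^ 2) / (4 * h)))) ^ 2 * r)
          - 2 ^ s * Gamma (s + 1) * (h / B) ^ (s + 1) * exp (B * R ^ 2 / (2 * h))|
        ≤ C := by
  have tail_nonneg :=
    setIntegral_Ioi_rpow_mul_exp_mul_sub_sq_nonneg (2 * s + 1) (B / (2 * h₀)) (R ^ 2) hR.le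
  have remainder_pos : 0 < R ^ (2 * s + 2) / (s + 1) :=
    div_pos (rpow_pos_of_pos hR _) (by linarith)
  refine ⟨_, add_pos_of_nonneg_of_pos tail_nonneg remainder_pos, fun h hh hlt ↦ ?_⟩
  have hh₀ : 0 < h₀ := hh.trans hlt
  have main_term : 2 ^ s * Gamma (s + 1) * (h / B) ^ (s + 1) =
      (B / (2 * h)) ^ (-(s + 1)) / 2 * Gamma (s + 1) := by
    rw [mul_right_comm, two_rpow_mul_rpow_add_one (by positivity), rpow_neg_eq_inv_rpow, inv_div,
      mul_div_assoc]
  simp only [← quasimode_div_two_mul, main_term, mul_div_right_comm B (R ^ 2)]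
  exact abs_setIntegral_quasimode_sq_sub_le hR hs (by positivity) (by gcongr)

/-- the squared norm of the quasimode satisfies
`∫₀^R v_m(r)² r dr = 2^m m! (h/B)^{m+1} e^{BR²/(2h)} + O(1)` as `h → 0⁺`. -/
theorem stmt13 (R B : ℝ) (hR : 0 < R) (hB : 0 < B) (m : ℕ) :
    ∃ C > 0, ∃ h₀ > 0, ∀ h : ℝ, 0 < h → h < h₀ →
      |(∫ r in Set.Ioo (0:ℝ) R,
            (r ^ m * (Real.exp (B * (R ^ 2 - r ^ 2) / (4 * h))
              - Real.exp (B * (r ^ 2 - R ^ 2) / (4 * h)))) ^ 2 * r)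
          - 2 ^ m * (Nat.factorial m) * (h / B) ^ (m + 1) * Real.exp (B * R ^ 2 / (2 * h))|
        ≤ C := by
  obtain ⟨C, hC, bound⟩ := stmt13_general (s := m) hR hB (by linarith [m.cast_nonneg (α := ℝ)])
    1
  exact ⟨C, hC, 1, one_pos, by exact_mod_cast Gamma_nat_eq_factorial m ▸ bound⟩
end
end

section
/- Let R > 0, B > 0 and let m ≥ 0 be an integer. Then there exist constants C > 0 and h₀ > 0 such that for all 0 < h < h₀: | 2(m+1) h B ∫₀^R r^{2m+1} ( e^{B(R²−r²)/(4h)} − e^{B(r²−R²)/(4h)} ) e^{B(r²−R²)/(4h)} dr − h B R^{2(m+1)} | ≤ C h². (This is the statement that the energy ⟨v_m, 𝒫_m v_m⟩ of the quasimode v_m(r) = r^m(e^{B(R²−r²)/(4h)} − e^{B(r²−R²)/(4h)}) equals hBR^{2(m+1)} + O(h²) as h → 0⁺.) -/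
open MeasureTheory

noncomputable section

/-!
With `c = B / (2h)`, multiplying out turns the integrand into
`r ^ (2m+1) * (1 - exp (c (r² - R²)))`. The monomial integrates to `R ^ (2m+2) / (2m+2)`, which
yields exactly the leading term. The remaining weight concentrates within distance `O(h)` of
`r = R`: since `r * exp (c (r² - R²))` has the primitive `exp (c (r² - R²)) / (2c)`, it contributes
at most `R ^ (2m) / (2c) = R ^ (2m) h / B`, which becomes `O(h²)` after multiplication by the
prefactor `2(m+1)hB`.
-/

open Set

lemma exp_neg_sub_exp_mul_exp (y : ℝ) :
    (Real.exp (-y) - Real.exp y) * Real.exp y = 1 - Real.exp (2 * y) := by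
  rw [sub_mul, ← Real.exp_add, ← Real.exp_add, neg_add_cancel, Real.exp_zero, two_mul]

lemma hasDerivAt_exp_mul_sq_sub (c s r : ℝ) :
    HasDerivAt (fun r : ℝ => Real.exp (c * (r ^ 2 - s)))
      (2 * c * (r * Real.exp (c * (r ^ 2 - s)))) r := by
  refine (((hasDerivAt_pow 2 r).sub_const s).const_mul c).exp.congr_deriv ?_
  push_cast
  ring

lemma integral_mul_exp_mul_sq_sub {c : ℝ} (hc : c ≠ 0) (s a b : ℝ) :
    ∫ r in a..b, r * Real.exp (c * (r ^ 2 - s))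
      = (Real.exp (c * (b ^ 2 - s)) - Real.exp (c * (a ^ 2 - s))) / (2 * c) := by
  rw [eq_div_iff (mul_ne_zero two_ne_zero hc), mul_comm, ← intervalIntegral.integral_const_mul]
  exact intervalIntegral.integral_eq_sub_of_hasDerivAt
    (fun r _ => hasDerivAt_exp_mul_sq_sub c s r)
    (Continuous.intervalIntegrable (by fun_prop) a b)

lemma integral_mul_exp_mul_sq_sub_sq_le {c : ℝ} (hc : 0 < c) (a b : ℝ) :
    ∫ r in a..b, r * Real.exp (c * (r ^ 2 - b ^ 2)) ≤ 1 / (2 * c) := by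
  rw [integral_mul_exp_mul_sq_sub hc.ne', sub_self, mul_zero, Real.exp_zero]
  gcongr
  exact sub_le_self 1 (Real.exp_pos _).le

lemma abs_integral_mul_mul_exp_mul_sq_sub_sq_le {R c M : ℝ} {f : ℝ → ℝ} (hR : 0 ≤ R) (hc : 0 < c)
    (hf : ∀ r ∈ Icc 0 R, |f r| ≤ M) :
    |∫ r in 0..R, f r * (r * Real.exp (c * (r ^ 2 - R ^ 2)))| ≤ M / (2 * c) := by
  have hM : 0 ≤ M := (abs_nonneg (f 0)).trans (hf 0 (left_mem_Icc.2 hR))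
  have hbound : ∀ r ∈ Ioc 0 R, ‖f r * (r * Real.exp (c * (r ^ 2 - R ^ 2)))‖
      ≤ M * (r * Real.exp (c * (r ^ 2 - R ^ 2))) := fun r hr => by
    have hweight : 0 ≤ r * Real.exp (c * (r ^ 2 - R ^ 2)) :=
      mul_nonneg hr.1.le (Real.exp_pos _).le
    rw [Real.norm_eq_abs, abs_mul, abs_of_nonneg hweight]
    exact mul_le_mul_of_nonneg_right (hf r (Ioc_subset_Icc_self hr)) hweight
  calc |∫ r in 0..R, f r * (r * Real.exp (c * (r ^ 2 - R ^ 2)))|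
      ≤ ∫ r in 0..R, M * (r * Real.exp (c * (r ^ 2 - R ^ 2))) :=
        intervalIntegral.norm_integral_le_of_norm_le hR (ae_of_all _ hbound)
          (Continuous.intervalIntegrable (by fun_prop) 0 R)
    _ = M * ∫ r in 0..R, r * Real.exp (c * (r ^ 2 - R ^ 2)) :=
        intervalIntegral.integral_const_mul _ _
    _ ≤ M * (1 / (2 * c)) := by
        gcongr
        exact integral_mul_exp_mul_sq_sub_sq_le hc 0 R
    _ = M / (2 * c) := mul_one_div _ _

lemma abs_integral_rpow_mul_exp_mul_sq_sub_sq_le {R c p : ℝ} (hR : 0 ≤ R) (hc : 0 < c)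
    (hp : 0 ≤ p) :
    |∫ r in 0..R, r ^ (p + 1) * Real.exp (c * (r ^ 2 - R ^ 2))| ≤ R ^ p / (2 * c) := by
  have hfactor : ∫ r in 0..R, r ^ (p + 1) * Real.exp (c * (r ^ 2 - R ^ 2))
      = ∫ r in 0..R, r ^ p * (r * Real.exp (c * (r ^ 2 - R ^ 2))) := by
    refine intervalIntegral.integral_congr fun r hr => ?_
    rw [uIcc_of_le hR] at hr
    simp only [Real.rpow_add_one' hr.1 (by positivity : p + 1 ≠ 0), mul_assoc]
  rw [hfactor]
  refine abs_integral_mul_mul_exp_mul_sq_sub_sq_le hR hc fun r hr => ?_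
  rw [abs_of_nonneg (Real.rpow_nonneg hr.1 p)]
  exact Real.rpow_le_rpow hr.1 hr.2 hp

lemma integral_rpow_mul_one_sub_exp_mul_sq_sub {p : ℝ} (hp : -1 < p) (c s R : ℝ) :
    ∫ r in 0..R, r ^ p * (1 - Real.exp (c * (r ^ 2 - s)))
      = R ^ (p + 1) / (p + 1) - ∫ r in 0..R, r ^ p * Real.exp (c * (r ^ 2 - s)) := by
  have hpow : IntervalIntegrable (fun r : ℝ => r ^ p) volume 0 R :=
    intervalIntegral.intervalIntegrable_rpow' hp
  simp_rw [mul_one_sub]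
  rw [intervalIntegral.integral_sub hpow (hpow.mul_continuousOn (by fun_prop)),
    integral_rpow (Or.inl hp), Real.zero_rpow (by linarith), sub_zero]

lemma integral_rpow_mul_exp_sub_exp_mul_exp {R : ℝ} (hR : 0 ≤ R) (B h p : ℝ) :
    ∫ r in Ioo 0 R, r ^ p * (Real.exp (B * (R ^ 2 - r ^ 2) / (4 * h))
        - Real.exp (B * (r ^ 2 - R ^ 2) / (4 * h))) * Real.exp (B * (r ^ 2 - R ^ 2) / (4 * h))
      = ∫ r in 0..R, r ^ p * (1 - Real.exp (B / (2 * h) * (r ^ 2 - R ^ 2))) := by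
  rw [intervalIntegral.integral_of_le hR, integral_Ioc_eq_integral_Ioo]
  refine setIntegral_congr_fun measurableSet_Ioo fun r _ => ?_
  have hneg : B * (R ^ 2 - r ^ 2) / (4 * h) = -(B * (r ^ 2 - R ^ 2) / (4 * h)) := by ring
  have hdouble : 2 * (B * (r ^ 2 - R ^ 2) / (4 * h)) = B / (2 * h) * (r ^ 2 - R ^ 2) := by ring
  rw [mul_assoc, hneg, exp_neg_sub_exp_mul_exp, hdouble]

theorem stmt14_general {R B m h : ℝ} (hR : 0 ≤ R) (hB : 0 < B) (hm : 0 ≤ m) (hh : 0 < h) :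
    |(2 * (m + 1) * h * B * ∫ r in Ioo 0 R,
          r ^ (2 * m + 1) * (Real.exp (B * (R ^ 2 - r ^ 2) / (4 * h))
            - Real.exp (B * (r ^ 2 - R ^ 2) / (4 * h)))
            * Real.exp (B * (r ^ 2 - R ^ 2) / (4 * h)))
        - h * B * R ^ (2 * (m + 1))|
      ≤ 2 * (m + 1) * R ^ (2 * m) * h ^ 2 := by
  have hlayer := abs_integral_rpow_mul_exp_mul_sq_sub_sq_le (c := B / (2 * h)) hR (by positivity)
    (mul_nonneg zero_le_two hm)
  rw [integral_rpow_mul_exp_sub_exp_mul_exp hR,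
    integral_rpow_mul_one_sub_exp_mul_sq_sub (by linarith),
    show 2 * m + 1 + 1 = 2 * (m + 1) by ring]
  set J := ∫ r in 0..R, r ^ (2 * m + 1) * Real.exp (B / (2 * h) * (r ^ 2 - R ^ 2))
  have hleading : 2 * (m + 1) * h * B * (R ^ (2 * (m + 1)) / (2 * (m + 1)) - J)
      - h * B * R ^ (2 * (m + 1)) = -(2 * (m + 1) * h * B * J) := by
    field_simp
    ring
  calc |2 * (m + 1) * h * B * (R ^ (2 * (m + 1)) / (2 * (m + 1)) - J)
          - h * B * R ^ (2 * (m + 1))|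
      = 2 * (m + 1) * h * B * |J| := by
        rw [hleading, abs_neg, abs_mul, abs_of_nonneg (by positivity)]
    _ ≤ 2 * (m + 1) * h * B * (R ^ (2 * m) / (2 * (B / (2 * h)))) := by gcongr
    _ = 2 * (m + 1) * R ^ (2 * m) * h ^ 2 := by field_simp

/-- the energy of the quasimode satisfies
`⟨v_m, 𝒫_m v_m⟩ = hBR^{2(m+1)} + O(h²)` as `h → 0⁺`. -/
theorem stmt14 (R B : ℝ) (hR : 0 < R) (hB : 0 < B) (m : ℕ) :
    ∃ C > 0, ∃ h₀ > 0, ∀ h : ℝ, 0 < h → h < h₀ →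
      |(2 * (m + 1) * h * B * ∫ r in Set.Ioo (0:ℝ) R,
            r ^ (2 * m + 1) * (Real.exp (B * (R ^ 2 - r ^ 2) / (4 * h))
              - Real.exp (B * (r ^ 2 - R ^ 2) / (4 * h)))
              * Real.exp (B * (r ^ 2 - R ^ 2) / (4 * h)))
          - h * B * R ^ (2 * (m + 1))|
        ≤ C * h ^ 2 := by
  refine ⟨2 * (m + 1) * R ^ (2 * m), by positivity, 1, one_pos, fun h hh _ => ?_⟩
  exact_mod_cast stmt14_general hR.le hB m.cast_nonneg hh
end
end

section
/- Let U ⊂ ℝ² be open, ψ : U → ℝ twice continuously differentiable, x₀ ∈ U, and ε > 0 such that the closed disk of radius ε around x₀ is contained in U. Assume ψ(x) > ψ(x₀) for all x ≠ x₀ in that closed disk, and that the Hessian matrix Hess ψ(x₀) is positive definite. Then lim_{h→0⁺} (1/h) ∫_{D(x₀,ε)} exp( −2(ψ(x) − ψ(x₀))/h ) dx = π · (det Hess ψ(x₀))^{−1/2}, where D(x₀,ε) is the open disk of radius ε around x₀. -/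
/-!
After the substitution `x = x₀ + √h • y`, the normalised integral becomes the integral over the
whole space of `exp (-2 (ψ (x₀ + √h • y) - ψ x₀) / h)`, cut off to `x₀ + √h • y ∈ D(x₀, ε)`. As
`x₀` is a critical point, Taylor's formula of order two gives the pointwise limit
`exp (-⟨y, H y⟩)`, where `H` is the Hessian at `x₀`. Taylor's formula near `x₀` together with
compactness and strict minimality away from `x₀` give `c ‖x - x₀‖ ^ 2 ≤ 2 (ψ x - ψ x₀)` on the whole
disk, so `exp (-c ‖y‖ ^ 2)` dominates. The limit is a Gaussian integral; a factorisation `H = Bᵀ B`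
turns it into `∫ exp (-‖B y‖ ^ 2) = π ^ (n / 2) / |det B|`.
-/

open MeasureTheory Filter Topology

noncomputable section

abbrev E2 : Type := EuclideanSpace ℝ (Fin 2)

/-- Partial derivative of a complex-valued function in the `i`-th coordinate direction. -/
def pdC (i : Fin 2) (f : E2 → ℂ) (x : E2) : ℂ :=
  fderiv ℝ f x (EuclideanSpace.single i 1)

/-- Partial derivative of a real-valued function in the `i`-th coordinate direction. -/
def pdR (i : Fin 2) (f : E2 → ℝ) (x : E2) : ℝ :=
  fderiv ℝ f x (EuclideanSpace.single i 1)

/-- The Laplacian `Δf = ∂₁²f + ∂₂²f`. -/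
def lapl (f : E2 → ℝ) (x : E2) : ℝ :=
  pdR 0 (pdR 0 f) x + pdR 1 (pdR 1 f) x

/-- The Hessian matrix of second partial derivatives of `ψ` at `x`. -/
def hess (ψ : E2 → ℝ) (x : E2) : Matrix (Fin 2) (Fin 2) ℝ :=
  Matrix.of fun i j => pdR i (pdR j ψ) x

open Asymptotics Module
open scoped Matrix MatrixOrder

section SecondOrder

variable {E F : Type*} [NormedAddCommGroup E] [NormedSpace ℝ E] [NormedAddCommGroup F]
  [NormedSpace ℝ F]

theorem isLittleO_sub_taylor_two {f : E → F} {f' : E → E →L[ℝ] F} {f'' : E →L[ℝ] E →L[ℝ] F} {x₀ : E}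
    (hf : ∀ᶠ x in 𝓝 x₀, HasFDerivAt f (f' x) x) (hf' : HasFDerivAt f' f'' x₀) :
    (fun x => f x - f x₀ - f' x₀ (x - x₀) - (2⁻¹ : ℝ) • f'' (x - x₀) (x - x₀))
      =o[𝓝 x₀] fun x => ‖x - x₀‖ ^ 2 := by
  obtain ⟨r, hr, hball⟩ := Metric.eventually_nhds_iff_ball.1 hf
  have hderiv : ∀ x ∈ Metric.ball x₀ r, HasFDerivWithinAt
      (fun x => f x - f' x₀ (x - x₀) - (2⁻¹ : ℝ) • f'' (x - x₀) (x - x₀))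
      (f' x - f' x₀ - f'' (x - x₀)) (Metric.ball x₀ r) x := by
    intro x hx
    have hid : HasFDerivAt (fun x => x - x₀) (.id ℝ E) x := (hasFDerivAt_id x).sub_const x₀
    have hquad := ((f''.hasFDerivAt.comp x hid).clm_apply hid).const_smul (2⁻¹ : ℝ)
    have hlin := (f' x₀).hasFDerivAt.comp x hid
    refine ((((hball x hx).sub hlin).sub hquad).congr_fderiv ?_).hasFDerivWithinAt
    ext v
    have hsymm : f'' v (x - x₀) = f'' (x - x₀) v :=
      second_derivative_symmetric_of_eventually hf hf' v (x - x₀)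
    have hhalf (w : F) : (2⁻¹ : ℝ) • (w + w) = w := by
      rw [← two_smul ℝ w, inv_smul_smul₀ two_ne_zero]
    simp only [add_apply, sub_apply, smul_apply,
      ContinuousLinearMap.comp_apply, ContinuousLinearMap.flip_apply, ContinuousLinearMap.id_apply,
      Function.comp_apply, hsymm, hhalf]
  have hrem := (convex_ball x₀ r).isLittleO_pow_succ (n := 1) (Metric.mem_ball_self hr) hderiv
    (by simpa [Metric.isOpen_ball.nhdsWithin_eq (Metric.mem_ball_self hr)]
      using hf'.isLittleO.norm_right)
  rw [Metric.isOpen_ball.nhdsWithin_eq (Metric.mem_ball_self hr)] at hrem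
  refine hrem.congr_left fun x => ?_
  simp only [sub_self, map_zero, smul_zero, sub_zero]
  abel

theorem isLittleO_two_mul_sub_of_isLocalMin {f : E → ℝ} {x₀ : E} (hmin : IsLocalMin f x₀)
    (hf : ∀ᶠ x in 𝓝 x₀, DifferentiableAt ℝ f x) (hf' : DifferentiableAt ℝ (fderiv ℝ f) x₀) :
    (fun x => 2 * (f x - f x₀) - fderiv ℝ (fderiv ℝ f) x₀ (x - x₀) (x - x₀))
      =o[𝓝 x₀] fun x => ‖x - x₀‖ ^ 2 := by
  have htaylor := isLittleO_sub_taylor_two (hf.mono fun x hx => hx.hasFDerivAt) hf'.hasFDerivAt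
  refine (htaylor.const_mul_left 2).congr_left fun x => ?_
  simp only [hmin.fderiv_eq_zero, zero_apply, sub_zero, smul_eq_mul]
  ring

theorem isCoercive_of_forall_pos [FiniteDimensional ℝ E] {B : E →L[ℝ] E →L[ℝ] ℝ}
    (hB : ∀ v, v ≠ 0 → 0 < B v v) : IsCoercive B := by
  obtain ⟨c, hc, hsphere⟩ := (isCompact_sphere (0 : E) 1).exists_forall_le'
    (f := fun v => B v v) (by fun_prop) fun v hv => hB v (ne_zero_of_mem_unit_sphere ⟨v, hv⟩)
  refine ⟨c, hc, fun v => ?_⟩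
  rcases eq_or_ne v 0 with rfl | hv
  · simp
  have hv' : ‖v‖ ≠ 0 := norm_ne_zero_iff.2 hv
  have hunit : c ≤ B (‖v‖⁻¹ • v) (‖v‖⁻¹ • v) := hsphere _ (by simp [norm_smul, hv'])
  calc c * ‖v‖ * ‖v‖ ≤ B (‖v‖⁻¹ • v) (‖v‖⁻¹ • v) * ‖v‖ * ‖v‖ := by gcongr
    _ = B v v := by
      simp only [map_smul, smul_apply, smul_eq_mul]
      field_simp

theorem exists_eventually_mul_norm_sq_le_of_isCoercive {B : E →L[ℝ] E →L[ℝ] ℝ} (hB : IsCoercive B)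
    {g : E → ℝ} {x₀ : E}
    (hg : (fun x => g x - B (x - x₀) (x - x₀)) =o[𝓝 x₀] fun x => ‖x - x₀‖ ^ 2) :
    ∃ c > 0, ∀ᶠ x in 𝓝 x₀, c * ‖x - x₀‖ ^ 2 ≤ g x := by
  obtain ⟨c, hc, hBc⟩ := hB
  refine ⟨c / 2, half_pos hc, ?_⟩
  filter_upwards [hg.bound (half_pos hc)] with x hx
  rw [Real.norm_eq_abs, norm_pow, norm_norm] at hx
  linarith [(abs_le.1 hx).1, hBc (x - x₀)]

end SecondOrder

theorem exists_mul_norm_sq_le_of_isCompact {E : Type*} [NormedAddCommGroup E] {K : Set E}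
    (hK : IsCompact K) {g : E → ℝ} (hg : ContinuousOn g K) {x₀ : E}
    (hpos : ∀ x ∈ K, x ≠ x₀ → 0 < g x)
    (hloc : ∃ c > 0, ∀ᶠ x in 𝓝 x₀, c * ‖x - x₀‖ ^ 2 ≤ g x) :
    ∃ c > 0, ∀ x ∈ K, c * ‖x - x₀‖ ^ 2 ≤ g x := by
  obtain ⟨c, hc, hnear⟩ := hloc
  obtain ⟨V, hV, hVo, hxV⟩ := eventually_nhds_iff.1 hnear
  have hne : ∀ x ∈ K \ V, x ≠ x₀ := fun x hx h => hx.2 (h ▸ hxV)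
  have hnorm : ∀ x ∈ K \ V, 0 < ‖x - x₀‖ ^ 2 := fun x hx =>
    pow_pos (norm_pos_iff.2 (sub_ne_zero.2 (hne x hx))) 2
  obtain ⟨m, hm, hfar⟩ := (hK.diff hVo).exists_forall_le'
    (f := fun x => g x / ‖x - x₀‖ ^ 2)
    ((hg.mono Set.sdiff_subset).div (by fun_prop) fun x hx => (hnorm x hx).ne')
    (a := 0) fun x hx => div_pos (hpos x hx.1 (hne x hx)) (hnorm x hx)
  refine ⟨min c m, lt_min hc hm, fun x hx => ?_⟩
  by_cases hxV : x ∈ V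
  · exact (mul_le_mul_of_nonneg_right (min_le_left c m) (by positivity)).trans (hV x hxV)
  · exact (mul_le_mul_of_nonneg_right (min_le_right c m) (by positivity)).trans
      ((le_div_iff₀ (hnorm x ⟨hx, hxV⟩)).1 (hfar x ⟨hx, hxV⟩))

section Rescaling

variable {E : Type*} [NormedAddCommGroup E] [NormedSpace ℝ E]

theorem tendsto_add_smul_nhds_zero (x₀ y : E) :
    Tendsto (fun r : ℝ => x₀ + r • y) (𝓝 0) (𝓝 x₀) := by
  have hcont : Continuous fun r : ℝ => x₀ + r • y := by fun_prop
  simpa using hcont.tendsto 0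

theorem tendsto_div_sq_of_isLittleO {g : E → ℝ} {B : E →L[ℝ] E →L[ℝ] ℝ} {x₀ : E}
    (hg : (fun x => g x - B (x - x₀) (x - x₀)) =o[𝓝 x₀] fun x => ‖x - x₀‖ ^ 2) (y : E) :
    Tendsto (fun r : ℝ => g (x₀ + r • y) / r ^ 2) (𝓝[≠] 0) (𝓝 (B y y)) := by
  have hline : Tendsto (fun r : ℝ => x₀ + r • y) (𝓝[≠] 0) (𝓝 x₀) :=
    (tendsto_add_smul_nhds_zero x₀ y).mono_left nhdsWithin_le_nhds
  have hrem : (fun r : ℝ => g (x₀ + r • y) - r ^ 2 * B y y) =o[𝓝[≠] 0] fun r => r ^ 2 := by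
    refine ((hg.comp_tendsto hline).congr (fun r => ?_) fun r => ?_).trans_isBigO
      (isBigO_const_mul_self (‖y‖ ^ 2) (fun r : ℝ => r ^ 2) (𝓝[≠] 0))
    · simp only [Function.comp_apply, add_sub_cancel_left, map_smul, smul_apply, smul_eq_mul]
      ring
    · simp only [Function.comp_apply, add_sub_cancel_left, norm_smul, mul_pow, Real.norm_eq_abs,
        sq_abs]
      ring
  have hsum := hrem.tendsto_div_nhds_zero.add_const (B y y)
  rw [zero_add] at hsum
  refine hsum.congr' ?_
  filter_upwards [self_mem_nhdsWithin] with r hr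
  have hr : r ≠ 0 := hr
  field_simp
  ring

theorem tendsto_indicator_exp_neg_div_sq {s : Set E} {x₀ : E} (hsx₀ : s ∈ 𝓝 x₀) {g : E → ℝ}
    {B : E →L[ℝ] E →L[ℝ] ℝ}
    (hg : (fun x => g x - B (x - x₀) (x - x₀)) =o[𝓝 x₀] fun x => ‖x - x₀‖ ^ 2) (y : E) :
    Tendsto (fun r : ℝ => s.indicator (fun x => Real.exp (-g x / r ^ 2)) (x₀ + r • y)) (𝓝[≠] 0)
      (𝓝 (Real.exp (-B y y))) := by
  refine (tendsto_div_sq_of_isLittleO hg y).neg.rexp.congr' ?_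
  filter_upwards [(tendsto_add_smul_nhds_zero x₀ y).mono_left nhdsWithin_le_nhds hsx₀]
    with r (hr : x₀ + r • y ∈ s)
  rw [Set.indicator_of_mem hr, neg_div]

theorem norm_indicator_exp_neg_div_sq_le {s : Set E} {x₀ : E} {g : E → ℝ} {c : ℝ}
    (hg : ∀ x ∈ s, c * ‖x - x₀‖ ^ 2 ≤ g x) {r : ℝ} (hr : 0 < r) (y : E) :
    ‖s.indicator (fun x => Real.exp (-g x / r ^ 2)) (x₀ + r • y)‖ ≤ Real.exp (-c * ‖y‖ ^ 2) := by
  by_cases hy : x₀ + r • y ∈ s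
  · have hbound := hg _ hy
    rw [add_sub_cancel_left, norm_smul, mul_pow, Real.norm_eq_abs, sq_abs] at hbound
    rw [Set.indicator_of_mem hy, Real.norm_eq_abs, Real.abs_exp, Real.exp_le_exp,
      div_le_iff₀ (by positivity)]
    linarith
  · rw [Set.indicator_of_notMem hy, norm_zero]
    positivity

end Rescaling

section Laplace

variable {E : Type*} [NormedAddCommGroup E] [NormedSpace ℝ E] [FiniteDimensional ℝ E]
  [MeasurableSpace E] [BorelSpace E] (μ : Measure E) [μ.IsAddHaarMeasure]

theorem integrable_exp_neg_mul_norm_sq {b : ℝ} (hb : 0 < b) :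
    Integrable (fun v : E => Real.exp (-b * ‖v‖ ^ 2)) μ := by
  rcases subsingleton_or_nontrivial E with _ | _
  · exact Integrable.of_finite
  · refine (integrable_fun_norm_addHaar μ (f := fun t => Real.exp (-b * t ^ 2))).2
      (Integrable.integrableOn ?_)
    simpa using integrable_rpow_mul_exp_neg_mul_sq hb (s := (finrank ℝ E - 1 : ℕ))
      (by linarith [Nat.cast_nonneg (α := ℝ) (finrank ℝ E - 1)])

theorem inv_pow_mul_setIntegral_eq_integral_indicator {s : Set E} (hs : MeasurableSet s) (F : E → ℝ)
    (x₀ : E) {r : ℝ} (hr : 0 ≤ r) :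
    (r ^ finrank ℝ E)⁻¹ * ∫ x in s, F x ∂μ = ∫ y, s.indicator F (x₀ + r • y) ∂μ := by
  rw [Measure.integral_comp_smul_of_nonneg μ (fun z => s.indicator F (x₀ + z)) r (hR := hr),
    integral_add_left_eq_self (s.indicator F), integral_indicator hs, smul_eq_mul]

theorem tendsto_inv_pow_mul_setIntegral_exp_neg_div_sq {s : Set E} (hs : MeasurableSet s) {x₀ : E}
    (hsx₀ : s ∈ 𝓝 x₀) {g : E → ℝ} (hgs : ContinuousOn g s) {B : E →L[ℝ] E →L[ℝ] ℝ}
    (hgB : (fun x => g x - B (x - x₀) (x - x₀)) =o[𝓝 x₀] fun x => ‖x - x₀‖ ^ 2)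
    {c : ℝ} (hc : 0 < c) (hgrowth : ∀ x ∈ s, c * ‖x - x₀‖ ^ 2 ≤ g x) :
    Tendsto (fun r : ℝ => (r ^ finrank ℝ E)⁻¹ * ∫ x in s, Real.exp (-g x / r ^ 2) ∂μ) (𝓝[>] 0)
      (𝓝 (∫ y, Real.exp (-B y y) ∂μ)) := by
  have hresc : ∀ᶠ r : ℝ in 𝓝[>] 0,
      ∫ y, s.indicator (fun x => Real.exp (-g x / r ^ 2)) (x₀ + r • y) ∂μ =
        (r ^ finrank ℝ E)⁻¹ * ∫ x in s, Real.exp (-g x / r ^ 2) ∂μ := by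
    filter_upwards [self_mem_nhdsWithin] with r hr
    exact (inv_pow_mul_setIntegral_eq_integral_indicator μ hs _ x₀ (le_of_lt hr)).symm
  refine Tendsto.congr' hresc (tendsto_integral_filter_of_dominated_convergence
    (fun y => Real.exp (-c * ‖y‖ ^ 2)) (.of_forall fun r => ?_) ?_
    (integrable_exp_neg_mul_norm_sq μ hc) (ae_of_all _ fun y => ?_))
  · have hmeas : Measurable (s.indicator fun x => Real.exp (-g x / r ^ 2)) := by
      classical
      rw [← Set.piecewise_eq_indicator]
      exact ContinuousOn.measurable_piecewise (by fun_prop) continuousOn_const hs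
    exact (hmeas.comp (by fun_prop : Measurable fun y : E => x₀ + r • y)).aestronglyMeasurable
  · filter_upwards [self_mem_nhdsWithin] with r hr
    exact ae_of_all _ (norm_indicator_exp_neg_div_sq_le hgrowth hr)
  · exact (tendsto_indicator_exp_neg_div_sq hsx₀ hgB y).mono_left
      (nhdsWithin_mono 0 fun r hr => ne_of_gt hr)

end Laplace

theorem integral_exp_neg_norm_sq_comp_linearMap {V : Type*} [NormedAddCommGroup V]
    [InnerProductSpace ℝ V] [FiniteDimensional ℝ V] [MeasurableSpace V] [BorelSpace V]
    {T : V →ₗ[ℝ] V} (hT : LinearMap.det T ≠ 0) :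
    ∫ v, Real.exp (-‖T v‖ ^ 2) = Real.pi ^ (finrank ℝ V / 2 : ℝ) * |LinearMap.det T|⁻¹ := by
  have hmeas : Measurable T := T.continuous_of_finiteDimensional.measurable
  have hgauss : ∫ v : V, Real.exp (-‖v‖ ^ 2) = Real.pi ^ (finrank ℝ V / 2 : ℝ) := by
    simpa using GaussianFourier.integral_rexp_neg_mul_sq_norm (V := V) one_pos
  rw [← integral_map (f := fun w : V => Real.exp (-‖w‖ ^ 2)) hmeas.aemeasurable
      (by fun_prop), Measure.map_linearMap_addHaar_eq_smul_addHaar _ hT,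
    integral_smul_measure, ENNReal.toReal_ofReal (abs_nonneg _), hgauss, abs_inv, smul_eq_mul,
    mul_comm]

section EuclideanSpace

variable {ι : Type*} [Fintype ι] [DecidableEq ι]

theorem dotProduct_conjTranspose_mul_self_mulVec (B : Matrix ι ι ℝ) (v : EuclideanSpace ℝ ι) :
    v ⬝ᵥ (Bᴴ * B) *ᵥ v = ‖Matrix.toEuclideanLin B v‖ ^ 2 := by
  rw [← real_inner_self_eq_norm_sq, EuclideanSpace.inner_eq_star_dotProduct, star_trivial,
    ← Matrix.mulVec_mulVec, Matrix.dotProduct_mulVec, Matrix.vecMul_conjTranspose, star_trivial,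
    star_trivial]
  rfl

theorem integral_exp_neg_dotProduct_mulVec {A : Matrix ι ι ℝ} (hA : A.PosDef) :
    ∫ v : EuclideanSpace ℝ ι, Real.exp (-(v ⬝ᵥ A *ᵥ v)) =
      Real.pi ^ (Fintype.card ι / 2 : ℝ) * A.det ^ (-1 / 2 : ℝ) := by
  obtain ⟨B, hAB⟩ := CStarAlgebra.nonneg_iff_eq_star_mul_self.1 hA.posSemidef.nonneg
  rw [Matrix.star_eq_conjTranspose] at hAB
  have hdetA : A.det = |B.det| ^ 2 := by
    rw [hAB, Matrix.det_mul, Matrix.det_conjTranspose, star_trivial, sq_abs, sq]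
  have hdetB : LinearMap.det (Matrix.toEuclideanLin B) = B.det := by
    rw [Matrix.toEuclideanLin, Matrix.toLpLin_eq_toLin, LinearMap.det_toLin]
  have hB : B.det ≠ 0 := fun h => hA.det_pos.ne' (by simp [hdetA, h])
  have hroot : A.det ^ (-1 / 2 : ℝ) = |B.det|⁻¹ := by
    rw [hdetA, ← Real.rpow_natCast, ← Real.rpow_mul (abs_nonneg _)]
    norm_num [Real.rpow_neg_one]
  rw [hroot]
  simp only [hAB, dotProduct_conjTranspose_mul_self_mulVec]
  rw [integral_exp_neg_norm_sq_comp_linearMap (hdetB ▸ hB), hdetB, finrank_euclideanSpace]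

/-- The Hessian matrix of a function on `ℝⁿ`, as the matrix of its iterated partial derivatives: the
`(i, j)` entry differentiates along the `j`-th coordinate first. It is the `n`-dimensional form of
`hess`. -/
def hessianMatrix (ψ : EuclideanSpace ℝ ι → ℝ) (x : EuclideanSpace ℝ ι) : Matrix ι ι ℝ :=
  Matrix.of fun i j =>
    fderiv ℝ (fun y => fderiv ℝ ψ y (EuclideanSpace.single j 1)) x (EuclideanSpace.single i 1)

theorem fderiv_fderiv_apply_eq_dotProduct_hessianMatrix {ψ : EuclideanSpace ℝ ι → ℝ}
    {x : EuclideanSpace ℝ ι} (hψ : DifferentiableAt ℝ (fderiv ℝ ψ) x) (v w : EuclideanSpace ℝ ι) :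
    fderiv ℝ (fderiv ℝ ψ) x v w = v ⬝ᵥ hessianMatrix ψ x *ᵥ w := by
  have hentry (i j : ι) : hessianMatrix ψ x i j =
      fderiv ℝ (fderiv ℝ ψ) x (EuclideanSpace.single i 1) (EuclideanSpace.single j 1) := by
    have hcoord := hψ.hasFDerivAt.clm_apply (hasFDerivAt_const (EuclideanSpace.single j (1 : ℝ)) x)
    rw [hessianMatrix, Matrix.of_apply, hcoord.fderiv]
    simp
  have hsum (u : EuclideanSpace ℝ ι) : u = ∑ i, u i • EuclideanSpace.single i (1 : ℝ) := by
    simpa using ((EuclideanSpace.basisFun ι ℝ).sum_repr u).symm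
  conv_lhs => rw [hsum v, hsum w]
  simp only [map_sum, map_smul, sum_apply, smul_apply, smul_eq_mul, dotProduct, Matrix.mulVec,
    hentry, Finset.mul_sum]
  rw [Finset.sum_comm]
  exact Finset.sum_congr rfl fun i _ => Finset.sum_congr rfl fun j _ => by ring

end EuclideanSpace

theorem tendsto_sqrt_nhdsGT_zero : Tendsto Real.sqrt (𝓝[>] 0) (𝓝[>] 0) := by
  refine tendsto_nhdsWithin_iff.2 ⟨?_, ?_⟩
  · simpa using (Real.continuous_sqrt.tendsto 0).mono_left nhdsWithin_le_nhds
  · filter_upwards [self_mem_nhdsWithin] with h hh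
    exact Real.sqrt_pos.2 hh

theorem inv_sqrt_pow_eq_rpow {h : ℝ} (hh : 0 ≤ h) (n : ℕ) : (√h ^ n)⁻¹ = h ^ (-(n : ℝ) / 2) := by
  rw [Real.sqrt_eq_rpow, ← Real.rpow_natCast, ← Real.rpow_mul hh, ← Real.rpow_neg hh]
  ring_nf

theorem stmt15_general {ι : Type*} [Fintype ι] [DecidableEq ι] {ψ : EuclideanSpace ℝ ι → ℝ}
    {K s : Set (EuclideanSpace ℝ ι)} {x₀ : EuclideanSpace ℝ ι} (hK : IsCompact K)
    (hψK : ContinuousOn ψ K) (hs : MeasurableSet s) (hsK : s ⊆ K) (hsx₀ : s ∈ 𝓝 x₀)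
    (hψ : ∀ᶠ x in 𝓝 x₀, DifferentiableAt ℝ ψ x) (hψ' : DifferentiableAt ℝ (fderiv ℝ ψ) x₀)
    (hmin : ∀ x ∈ K, x ≠ x₀ → ψ x₀ < ψ x) (hpos : (hessianMatrix ψ x₀).PosDef) :
    Tendsto
      (fun h : ℝ => h ^ (-(Fintype.card ι : ℝ) / 2) *
        ∫ x in s, Real.exp (-2 * (ψ x - ψ x₀) / h))
      (𝓝[>] 0)
      (𝓝 (Real.pi ^ (Fintype.card ι / 2 : ℝ) * (hessianMatrix ψ x₀).det ^ (-1 / 2 : ℝ))) := by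
  have hlocal : IsLocalMin ψ x₀ := by
    filter_upwards [hsx₀] with x hx
    rcases eq_or_ne x x₀ with rfl | hne
    exacts [le_rfl, (hmin x (hsK hx) hne).le]
  have htaylor := isLittleO_two_mul_sub_of_isLocalMin hlocal hψ hψ'
  have hcoer : IsCoercive (fderiv ℝ (fderiv ℝ ψ) x₀) := isCoercive_of_forall_pos fun v hv => by
    rw [fderiv_fderiv_apply_eq_dotProduct_hessianMatrix hψ']
    exact hpos.dotProduct_mulVec_pos (by simpa using hv)
  have hcont : ContinuousOn (fun x => 2 * (ψ x - ψ x₀)) K := by fun_prop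
  obtain ⟨c, hc, hgrowth⟩ := exists_mul_norm_sq_le_of_isCompact hK hcont
    (fun x hx hne => mul_pos two_pos (sub_pos.2 (hmin x hx hne)))
    (exists_eventually_mul_norm_sq_le_of_isCoercive hcoer htaylor)
  have hlaplace := (tendsto_inv_pow_mul_setIntegral_exp_neg_div_sq volume hs hsx₀
    (hcont.mono hsK) htaylor hc fun x hx => hgrowth x (hsK hx)).comp tendsto_sqrt_nhdsGT_zero
  simp only [fderiv_fderiv_apply_eq_dotProduct_hessianMatrix hψ',
    integral_exp_neg_dotProduct_mulVec hpos, finrank_euclideanSpace] at hlaplace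
  refine hlaplace.congr' ?_
  filter_upwards [self_mem_nhdsWithin] with h (hh : 0 < h)
  simp only [Function.comp_apply, inv_sqrt_pow_eq_rpow hh.le, Real.sq_sqrt hh.le, neg_mul]

/-- Laplace method: if `ψ` has a unique minimum at `x₀` in the closed disk of
radius `ε`, with positive definite Hessian, then
`(1/h)∫_{D(x₀,ε)} e^{−2(ψ−ψ(x₀))/h} → π (det Hess ψ(x₀))^{−1/2}` as `h → 0⁺`. -/
theorem stmt15 (U : Set E2) (hU : IsOpen U)
    (ψ : E2 → ℝ) (hψ : ContDiffOn ℝ 2 ψ U)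
    (x₀ : E2) (hx₀ : x₀ ∈ U) (ε : ℝ) (hε : 0 < ε)
    (hball : Metric.closedBall x₀ ε ⊆ U)
    (hmin : ∀ x ∈ Metric.closedBall x₀ ε, x ≠ x₀ → ψ x₀ < ψ x)
    (hpos : (hess ψ x₀).PosDef) :
    Tendsto
      (fun h : ℝ => (1 / h) *
        ∫ x in Metric.ball x₀ ε, Real.exp (-2 * (ψ x - ψ x₀) / h))
      (𝓝[>] 0) (𝓝 (Real.pi * (hess ψ x₀).det ^ (-(1:ℝ)/2))) := by
  have hcd : ContDiffAt ℝ 2 ψ x₀ := hψ.contDiffAt (hU.mem_nhds hx₀)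
  have hhess : hess ψ x₀ = hessianMatrix ψ x₀ := rfl
  simpa [hhess, Real.rpow_neg_one] using stmt15_general (isCompact_closedBall x₀ ε)
    (hψ.continuousOn.mono hball) measurableSet_ball Metric.ball_subset_closedBall
    (Metric.ball_mem_nhds x₀ hε)
    ((hcd.eventually (by simp)).mono fun x hx => hx.differentiableAt two_ne_zero)
    ((hcd.fderiv_right (m := 1) (by norm_num)).differentiableAt one_ne_zero) hmin hpos
end
end

section
/- Let Ω ⊂ ℝ² be a nonempty bounded open strictly convex set, and let ψ be continuous on the closure of Ω, smooth on Ω, with Δψ = 1 in Ω and ψ = 0 on ∂Ω. Then there exists a unique point x₀ ∈ Ω such that ψ(x₀) = inf_Ω ψ. -/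
/-!
`ψ` is negative in `Ω` by the maximum principle, so its minimum over the compact closure is attained
in `Ω`. Uniqueness rests on the concavity of `w = (-ψ) ^ (1 / 3)`, which follows from a
Korevaar–Kennington concavity maximum principle: the function
`C (x, y) = (w x + w y) / 2 - w ((x + y) / 2)` has no positive maximum over pairs of points of the
closure.

* At a pair of interior points, `∇w` takes the same value `p` at `x`, `y` and the midpoint, and
  `-1 / Δw = 3 w² / (1 + 6 |p|² w)` is strictly increasing and convex in `w`. The second-order
  condition for a maximum of `C`, tested with suitably scaled displacements, says that `-1 / Δw` at
  the midpoint is at least its mean at `x` and `y`, a contradiction if `C (x, y) > 0`.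
* If `x` is a boundary point, inscribed balls give `-ψ ≥ c t²` at distance proportional to `t` from
  `x` along the segment to the midpoint, without any regularity of the boundary. Hence `w` grows at
  least like `t ^ (2 / 3)` there and moving `x` inwards increases `C`. The square root, the usual
  choice, lacks this infinite slope at corners.

Concavity makes the set of minimum points closed under midpoints, so two distinct minimum points
produce a sequence of minimum points on a line accumulating at one of them. As `ψ - |x|² / 4` is
harmonic, `ψ` is real-analytic, hence constant along that line up to the boundary, where `ψ = 0`: a
contradiction.
-/

open MeasureTheory Filter Topology

noncomputable section

section Calculus

open InnerProductSpace Laplacian Module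

lemma deriv_deriv_nonpos_of_isLocalMax {φ : ℝ → ℝ} {a : ℝ} (hmax : IsLocalMax φ a)
    (hφ : ContinuousAt φ a) : deriv (deriv φ) a ≤ 0 := by
  by_contra! hpos
  have hmin : IsLocalMin φ a := isLocalMin_of_deriv_deriv_pos hpos hmax.deriv_eq_zero hφ
  have hconst : φ =ᶠ[𝓝 a] fun _ => φ a := by
    filter_upwards [hmax, hmin] with t using le_antisymm
  have hzero : deriv (deriv φ) a = 0 := by simp [hconst.deriv.deriv_eq]
  exact hpos.ne' hzero

section NormedSpace

variable {V F : Type*} [NormedAddCommGroup V] [NormedSpace ℝ V] [NormedAddCommGroup F]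
  [NormedSpace ℝ F] {f : V → F} {x : V}

lemma differentiableAt_fderiv (hf : ContDiffAt ℝ 2 f x) :
    DifferentiableAt ℝ (fderiv ℝ f) x :=
  (hf.fderiv_right (m := 1) (by norm_num)).differentiableAt (by norm_num)

lemma deriv_deriv_comp_add_smul (hf : ContDiffAt ℝ 2 f x) (v : V) :
    deriv (deriv fun t : ℝ => f (x + t • v)) 0 = fderiv ℝ (fderiv ℝ f) x v v := by
  have hx : x + (0 : ℝ) • v = x := by rw [zero_smul, add_zero]
  have hline : Tendsto (fun t : ℝ => x + t • v) (𝓝 0) (𝓝 x) := by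
    have hcont : Continuous fun t : ℝ => x + t • v := by fun_prop
    simpa only [hx] using hcont.tendsto 0
  have hderiv : deriv (fun t : ℝ => f (x + t • v)) =ᶠ[𝓝 0]
      fun t => fderiv ℝ f (x + t • v) v := by
    filter_upwards [hline.eventually (hf.eventually (by simp))] with t ht
    exact (ht.differentiableAt two_ne_zero).deriv_comp_add_smul
  have hf' : DifferentiableAt ℝ (fderiv ℝ f) (x + (0 : ℝ) • v) := by
    rw [hx]
    exact differentiableAt_fderiv hf
  rw [hderiv.deriv_eq, (hf'.clm_apply (differentiableAt_const v)).deriv_comp_add_smul, hx,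
    fderiv_clm_apply (hx ▸ hf') (differentiableAt_const v)]
  simp

lemma contDiffAt_comp_const_add_smul {n : WithTop ℕ∞} (hf : ContDiffAt ℝ n f x) (s : ℝ) :
    ContDiffAt ℝ n (fun h => f (x + s • h)) 0 :=
  ContDiffAt.comp (0 : V) (by simpa using hf) (by fun_prop)

lemma fderiv_comp_const_add_smul (f : V → F) (x : V) (s : ℝ) :
    fderiv ℝ (fun h => f (x + s • h)) = s • fun h => fderiv ℝ f (x + s • h) := by
  funext h
  rw [fderiv_comp_smul (f := fun y => f (x + y)), fderiv_comp_add_left, Pi.smul_apply]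

end NormedSpace

variable {E E' F : Type*} [NormedAddCommGroup E] [InnerProductSpace ℝ E] [FiniteDimensional ℝ E]
  [NormedAddCommGroup E'] [InnerProductSpace ℝ E'] [FiniteDimensional ℝ E']
  [NormedAddCommGroup F] [NormedSpace ℝ F] {f : E → ℝ} {x : E}

lemma laplacian_eq_sum_fderiv_fderiv {ι : Type*} [Fintype ι] (b : OrthonormalBasis ι ℝ E)
    (f : E → F) (x : E) : Δ f x = ∑ i, fderiv ℝ (fderiv ℝ f) x (b i) (b i) := by
  simp [laplacian_eq_iteratedFDeriv_orthonormalBasis f b, iteratedFDeriv_two_apply]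

lemma laplacian_nonpos_of_isLocalMax (hf : ContDiffAt ℝ 2 f x) (hmax : IsLocalMax f x) :
    Δ f x ≤ 0 := by
  rw [laplacian_eq_sum_fderiv_fderiv (stdOrthonormalBasis ℝ E)]
  refine Finset.sum_nonpos fun i _ => ?_
  rw [← deriv_deriv_comp_add_smul hf]
  have hline : Continuous fun t : ℝ => x + t • stdOrthonormalBasis ℝ E i := by fun_prop
  have hx : x + (0 : ℝ) • stdOrthonormalBasis ℝ E i = x := by simp
  refine deriv_deriv_nonpos_of_isLocalMax ?_ ?_
  · exact IsLocalMax.comp_continuous (g := fun t : ℝ => x + t • stdOrthonormalBasis ℝ E i)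
      (by rwa [hx]) hline.continuousAt
  · exact ContinuousAt.comp (by rw [hx]; exact hf.continuousAt) hline.continuousAt

lemma laplacian_comp_linearIsometryEquiv (L : E' ≃ₗᵢ[ℝ] E) (f : E → F) (x : E') :
    Δ (f ∘ L) x = Δ f (L x) := by
  simp only [laplacian_eq_iteratedFDeriv_orthonormalBasis _ (stdOrthonormalBasis ℝ E'),
    laplacian_eq_iteratedFDeriv_orthonormalBasis _ ((stdOrthonormalBasis ℝ E').map L)]
  have hcomp : iteratedFDeriv ℝ 2 (f ∘ L) x =
      (iteratedFDeriv ℝ 2 f (L x)).compContinuousLinearMap fun _ => (L : E' →L[ℝ] E) := by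
    simp only [← iteratedFDerivWithin_univ]
    exact L.toContinuousLinearEquiv.iteratedFDerivWithin_comp_right f uniqueDiffOn_univ
      (Set.mem_univ _) 2
  simp [hcomp, iteratedFDeriv_two_apply]

lemma laplacian_comp_const_add_smul (f : E → F) (x : E) (s : ℝ) :
    Δ (fun h => f (x + s • h)) 0 = s ^ 2 • Δ f x := by
  have hderiv₂ : fderiv ℝ (fderiv ℝ fun h => f (x + s • h)) 0 =
      s ^ 2 • fderiv ℝ (fderiv ℝ f) x := by
    have hsmul := fderiv_const_smul_field (𝕜 := ℝ) (f := fun h => fderiv ℝ f (x + s • h)) s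
    rw [fderiv_comp_const_add_smul, hsmul, fderiv_comp_const_add_smul]
    simp only [Pi.smul_apply, smul_zero, add_zero, smul_smul, sq]
  simp only [laplacian_eq_sum_fderiv_fderiv (stdOrthonormalBasis ℝ E), hderiv₂, Finset.smul_sum]
  rfl

lemma laplacian_norm_sub_sq (a x : E) : Δ (fun y => ‖y - a‖ ^ 2) x = 2 * finrank ℝ E := by
  have hderiv : fderiv ℝ (fun y => ‖y - a‖ ^ 2) =
      fun y => (2 • innerSL ℝ : E →L[ℝ] E →L[ℝ] ℝ) (y - a) := by
    funext y
    rw [fderiv_comp_sub (f := fun y => ‖y‖ ^ 2)]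
    exact (hasStrictFDerivAt_norm_sq (y - a)).hasFDerivAt.fderiv
  rw [laplacian_eq_sum_fderiv_fderiv (stdOrthonormalBasis ℝ E), hderiv]
  simp only [fderiv_comp_sub, ContinuousLinearMap.fderiv]
  have hunit (i) : innerSL ℝ (stdOrthonormalBasis ℝ E i) (stdOrthonormalBasis ℝ E i) = 1 := by
    rw [innerSL_apply_apply, real_inner_self_eq_norm_sq, OrthonormalBasis.norm_eq_one, one_pow]
  simp [mul_comm, hunit]

lemma laplacian_comp_real {g : ℝ → ℝ} (hg : ContDiffAt ℝ 2 g (f x)) (hf : ContDiffAt ℝ 2 f x) :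
    Δ (g ∘ f) x =
      deriv g (f x) * Δ f x + deriv (deriv g) (f x) * ‖fderiv ℝ f x‖ ^ 2 := by
  have hfd : DifferentiableAt ℝ f x := hf.differentiableAt two_ne_zero
  have hderiv : fderiv ℝ (g ∘ f) =ᶠ[𝓝 x] fun y => deriv g (f y) • fderiv ℝ f y := by
    filter_upwards [hf.eventually (by simp),
      hf.continuousAt.eventually (hg.eventually (by simp))] with y hfy hgy
    exact ((hgy.differentiableAt two_ne_zero).hasDerivAt.comp_hasFDerivAt y
      (hfy.differentiableAt two_ne_zero).hasFDerivAt).fderiv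
  have hg' : HasDerivAt (deriv g) (deriv (deriv g) (f x)) (f x) :=
    ((differentiableAt_fderiv hg).clm_apply (differentiableAt_const 1)).hasDerivAt
  have hderiv₂ := ((hg'.comp_hasFDerivAt x hfd.hasFDerivAt).fun_smul
    (differentiableAt_fderiv hf).hasFDerivAt).fderiv
  simp only [laplacian_eq_sum_fderiv_fderiv (stdOrthonormalBasis ℝ E), hderiv.fderiv_eq,
    (stdOrthonormalBasis ℝ E).norm_dual, Finset.mul_sum, ← Finset.sum_add_distrib]
  refine Finset.sum_congr rfl fun i _ => ?_
  simp only [Function.comp_apply] at hderiv₂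
  simp only [hderiv₂, add_apply, smul_apply, ContinuousLinearMap.smulRight_apply, smul_eq_mul]
  ring

end Calculus

section MaximumPrinciple

open InnerProductSpace Laplacian Module

variable {E : Type*} [NormedAddCommGroup E] [InnerProductSpace ℝ E] [FiniteDimensional ℝ E]
  {U : Set E} {f : E → ℝ}

lemma le_of_laplacian_pos {M : ℝ} (hU : IsOpen U) (hUb : Bornology.IsBounded U)
    (hfc : ContinuousOn f (closure U)) (hf : ContDiffOn ℝ 2 f U) (hΔ : ∀ x ∈ U, 0 < Δ f x)
    (hbd : ∀ x ∈ frontier U, f x ≤ M) : ∀ x ∈ closure U, f x ≤ M := by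
  intro x hx
  obtain ⟨m, hm, hmax⟩ := hUb.isCompact_closure.exists_isMaxOn ⟨x, hx⟩ hfc
  have hmU : m ∉ U := fun hmU => by
    have hloc : IsLocalMax f m :=
      hmax.isLocalMax (mem_of_superset (hU.mem_nhds hmU) subset_closure)
    exact (hΔ m hmU).not_ge
      (laplacian_nonpos_of_isLocalMax (hf.contDiffAt (hU.mem_nhds hmU)) hloc)
  exact (hmax hx).trans (hbd m (hU.frontier_eq ▸ ⟨hm, hmU⟩))

lemma le_neg_mul_sq_of_le_laplacian {x : E} {r c : ℝ} (hc : 0 < c) (hr : 0 < r)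
    (hfc : ContinuousOn f (Metric.closedBall x r)) (hf : ContDiffOn ℝ 2 f (Metric.ball x r))
    (hΔ : ∀ y ∈ Metric.ball x r, c ≤ Δ f y) (hbd : ∀ y ∈ Metric.sphere x r, f y ≤ 0) :
    f x ≤ -(c / (2 * (finrank ℝ E + 1)) * r ^ 2) := by
  -- The sharp constant is `c / (2 * finrank ℝ E)`; with a smaller one, the difference of `f` and
  -- the quadratic barrier is strictly subharmonic, so the weak maximum principle suffices.
  set a : ℝ := c / (2 * (finrank ℝ E + 1)) with ha
  set q : E → ℝ := fun y => ‖y - x‖ ^ 2 with hq_def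
  have hq : ContDiff ℝ 2 q := (contDiff_id.sub contDiff_const).norm_sq ℝ
  have haq : ContDiff ℝ 2 (a • q) := contDiff_const.smul hq
  have hΔaq (y : E) : Δ (a • q) y < c := by
    rw [laplacian_smul a hq.contDiffAt, laplacian_norm_sub_sq, smul_eq_mul, ha,
      div_mul_eq_mul_div, div_lt_iff₀ (by positivity)]
    linarith
  have hle := le_of_laplacian_pos (f := f - a • q) (M := -(a * r ^ 2))
    Metric.isOpen_ball Metric.isBounded_ball
    ((hfc.mono Metric.closure_ball_subset_closedBall).sub haq.continuous.continuousOn)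
    (hf.sub haq.contDiffOn)
    (fun y hy => by
      rw [(hf.contDiffAt (Metric.isOpen_ball.mem_nhds hy)).laplacian_sub haq.contDiffAt]
      exact sub_pos.2 ((hΔaq y).trans_le (hΔ y hy)))
    (fun y hy => by
      have hy' := Metric.frontier_ball_subset_sphere hy
      simpa [hq_def, mem_sphere_iff_norm.1 hy'] using hbd y hy')
    x (subset_closure (Metric.mem_ball_self hr))
  simpa [hq_def] using hle

end MaximumPrinciple

/-- The concavity function `(w x + w y) / 2 - w ((x + y) / 2)` of Korevaar and Kennington. A
continuous function `w` is concave when it is nowhere positive. -/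
def concavityFunction {V : Type*} [AddCommGroup V] [Module ℝ V] (w : V → ℝ) (x y : V) : ℝ :=
  (w x + w y) / 2 - w (midpoint ℝ x y)

section ConcavityFunction

open InnerProductSpace Laplacian Module

lemma concavityFunction_comm {V : Type*} [AddCommGroup V] [Module ℝ V] (w : V → ℝ) (x y : V) :
    concavityFunction w x y = concavityFunction w y x := by
  rw [concavityFunction, concavityFunction, add_comm, midpoint_comm]

lemma concavityFunction_add_smul {V : Type*} [AddCommGroup V] [Module ℝ V] (w : V → ℝ)
    (x y h : V) (s t : ℝ) : concavityFunction w (x + s • h) (y + t • h) =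
      2⁻¹ * (w (x + s • h) + w (y + t • h)) - w (midpoint ℝ x y + ((s + t) / 2) • h) := by
  have hmid : midpoint ℝ (x + s • h) (y + t • h) = midpoint ℝ x y + ((s + t) / 2) • h := by
    simp only [midpoint_eq_smul_add, invOf_eq_inv]
    module
  rw [concavityFunction, hmid, div_eq_inv_mul]

lemma concavityFunction_nonpos_of_concaveOn {V : Type*} [AddCommGroup V] [Module ℝ V]
    {s : Set V} {f : V → ℝ} (hf : ConcaveOn ℝ s f) {x y : V} (hx : x ∈ s) (hy : y ∈ s) :
    concavityFunction f x y ≤ 0 := by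
  have h : 2⁻¹ * f x + 2⁻¹ * f y ≤ f (midpoint ℝ x y) := by
    rw [midpoint_eq_smul_add, invOf_eq_inv, smul_add]
    exact hf.2 hx hy (by norm_num) (by norm_num) (by norm_num)
  rw [concavityFunction]
  linarith

section Differential

variable {V : Type*} [NormedAddCommGroup V] [NormedSpace ℝ V] {w : V → ℝ} {x y : V}

lemma isLocalMax_concavityFunction_add_smul
    (hmax : IsLocalMax (Function.uncurry (concavityFunction w)) (x, y)) (s t : ℝ) :
    IsLocalMax (fun h => concavityFunction w (x + s • h) (y + t • h)) 0 := by
  have hcont : Continuous fun h : V => (x + s • h, y + t • h) := by fun_prop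
  exact IsLocalMax.comp_continuous (f := Function.uncurry (concavityFunction w))
    (g := fun h : V => (x + s • h, y + t • h)) (by simpa using hmax) hcont.continuousAt

lemma fderiv_eq_of_isLocalMax_concavityFunction (hx : DifferentiableAt ℝ w x)
    (hz : DifferentiableAt ℝ w (midpoint ℝ x y))
    (hmax : IsLocalMax (fun p => concavityFunction w p y) x) :
    fderiv ℝ w x = fderiv ℝ w (midpoint ℝ x y) := by
  have hmid : HasFDerivAt (fun p => midpoint ℝ p y) ((2⁻¹ : ℝ) • ContinuousLinearMap.id ℝ V) x := by
    simp only [midpoint_eq_smul_add, invOf_eq_inv]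
    exact ((hasFDerivAt_id x).add_const y).const_smul 2⁻¹
  have hwmid := HasFDerivAt.comp (f := fun p => midpoint ℝ p y) x hz.hasFDerivAt hmid
  have hC : HasFDerivAt (fun p => 2⁻¹ * (w p + w y) - w (midpoint ℝ p y)) _ x :=
    ((hx.hasFDerivAt.add_const (w y)).const_mul 2⁻¹).sub hwmid
  simp only [concavityFunction, div_eq_inv_mul] at hmax
  have hzero := hmax.hasFDerivAt_eq_zero hC
  rwa [ContinuousLinearMap.comp_smul, ContinuousLinearMap.comp_id, ← smul_sub,
    smul_eq_zero_iff_right (by norm_num), sub_eq_zero] at hzero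

end Differential

variable {E : Type*} [NormedAddCommGroup E] [InnerProductSpace ℝ E] [FiniteDimensional ℝ E]
  {w : E → ℝ} {x y : E}

lemma add_laplacian_le_of_isLocalMax_concavityFunction (hx : ContDiffAt ℝ 2 w x)
    (hy : ContDiffAt ℝ 2 w y) (hz : ContDiffAt ℝ 2 w (midpoint ℝ x y))
    (hmax : IsLocalMax (Function.uncurry (concavityFunction w)) (x, y)) (s t : ℝ) :
    2⁻¹ * (s ^ 2 * Δ w x + t ^ 2 * Δ w y) ≤ ((s + t) / 2) ^ 2 * Δ w (midpoint ℝ x y) := by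
  set wx : E → ℝ := fun h => w (x + s • h)
  set wy : E → ℝ := fun h => w (y + t • h)
  set wz : E → ℝ := fun h => w (midpoint ℝ x y + ((s + t) / 2) • h)
  have hwx : ContDiffAt ℝ 2 wx 0 := contDiffAt_comp_const_add_smul hx s
  have hwy : ContDiffAt ℝ 2 wy 0 := contDiffAt_comp_const_add_smul hy t
  have hwz : ContDiffAt ℝ 2 wz 0 := contDiffAt_comp_const_add_smul hz _
  have hmean : ContDiffAt ℝ 2 ((2⁻¹ : ℝ) • (wx + wy)) 0 := contDiffAt_const.smul (hwx.add hwy)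
  have hΦ : (fun h => concavityFunction w (x + s • h) (y + t • h)) =
      (2⁻¹ : ℝ) • (wx + wy) - wz := funext fun h => concavityFunction_add_smul w x y h s t
  have hle : Δ ((2⁻¹ : ℝ) • (wx + wy) - wz) 0 ≤ 0 :=
    laplacian_nonpos_of_isLocalMax (hmean.sub hwz)
      (by rw [← hΦ]; exact isLocalMax_concavityFunction_add_smul hmax s t)
  rw [hmean.laplacian_sub hwz, laplacian_smul (f := wx + wy) _ (hwx.add hwy), hwx.laplacian_add hwy,
    laplacian_comp_const_add_smul, laplacian_comp_const_add_smul, laplacian_comp_const_add_smul,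
    smul_eq_mul] at hle
  exact sub_nonpos.1 hle

lemma laplacian_pow_three (hw : ContDiffAt ℝ 2 w x) :
    Δ (w ^ 3) x = 3 * w x ^ 2 * Δ w x + 6 * w x * ‖fderiv ℝ w x‖ ^ 2 := by
  have hderiv : deriv (fun t : ℝ => t ^ 3) = fun t => 3 * t ^ 2 := by ext t; simp
  have h := laplacian_comp_real (g := fun t : ℝ => t ^ 3) (contDiff_id.pow 3).contDiffAt hw
  have hderiv₂ : deriv (fun t : ℝ => 3 * t ^ 2) (w x) = 6 * w x := by
    rw [((hasDerivAt_pow 2 (w x)).const_mul 3).deriv]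
    push_cast
    ring
  rw [hderiv, hderiv₂] at h
  exact h

end ConcavityFunction

section Algebra

lemma inv_add_inv_div_two_le_inv {a b c : ℝ} (ha : 0 < a) (hb : 0 < b) (hc : 0 < c)
    (h : ∀ s t : ℝ, ((s + t) / 2) ^ 2 * c ≤ 2⁻¹ * (s ^ 2 * a + t ^ 2 * b)) :
    (a⁻¹ + b⁻¹) / 2 ≤ c⁻¹ := by
  have hm : 0 < (a⁻¹ + b⁻¹) / 2 := by positivity
  have hst : ((a⁻¹ + b⁻¹) / 2) ^ 2 * c ≤ (a⁻¹ + b⁻¹) / 2 := by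
    convert h a⁻¹ b⁻¹ using 1
    field_simp
  rw [le_inv_comm₀ hm hc]
  rw [sq, mul_assoc] at hst
  rw [← one_div, le_div_iff₀ hm, mul_comm]
  exact le_of_mul_le_mul_left (by simpa using hst) hm

lemma sq_div_lt_mean_sq_div {W₁ W₂ W₃ f₁ f₂ f₃ P : ℝ} (hW₁ : 0 < W₁) (hW₂ : 0 < W₂)
    (hW₃ : 0 < W₃) (hf₁ : 0 < f₁) (hf₂ : 0 < f₂) (hP : 0 ≤ P) (hf : (f₁ + f₂) / 2 ≤ f₃)
    (hW : W₃ < (W₁ + W₂) / 2) :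
    W₃ ^ 2 / (f₃ + P * W₃) < (W₁ ^ 2 / (f₁ + P * W₁) + W₂ ^ 2 / (f₂ + P * W₂)) / 2 := by
  have hW₁₂ : 0 < (W₁ + W₂) / 2 := by positivity
  have hf₁₂ : 0 < (f₁ + f₂) / 2 := by positivity
  calc W₃ ^ 2 / (f₃ + P * W₃) ≤ W₃ ^ 2 / ((f₁ + f₂) / 2 + P * W₃) := by gcongr
    _ < ((W₁ + W₂) / 2) ^ 2 / ((f₁ + f₂) / 2 + P * ((W₁ + W₂) / 2)) := by
      have := mul_pos (mul_pos hW₁₂ hW₃) (sub_pos.2 hW)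
      rw [div_lt_div_iff₀ (by positivity) (by positivity)]
      have h1 : W₃ ^ 2 < ((W₁ + W₂) / 2) ^ 2 := by gcongr
      nlinarith [mul_nonneg hP this.le, mul_lt_mul_of_pos_left h1 hf₁₂]
    _ = (W₁ + W₂) ^ 2 / ((f₁ + P * W₁) + (f₂ + P * W₂)) / 2 := by
      field_simp
      ring
    _ ≤ (W₁ ^ 2 / (f₁ + P * W₁) + W₂ ^ 2 / (f₂ + P * W₂)) / 2 := by
      gcongr
      have h₁ : 0 < f₁ + P * W₁ := by positivity
      have h₂ : 0 < f₂ + P * W₂ := by positivity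
      have hden : ∀ i ∈ Finset.univ, 0 < ![f₁ + P * W₁, f₂ + P * W₂] i := by
        simp [Fin.forall_fin_two, h₁, h₂]
      simpa [Fin.sum_univ_two] using
        Finset.sq_sum_div_le_sum_sq_div Finset.univ ![W₁, W₂] hden

end Algebra

section InteriorMaximum

open InnerProductSpace Laplacian

variable {E : Type*} [NormedAddCommGroup E] [InnerProductSpace ℝ E] [FiniteDimensional ℝ E]
  {Ω : Set E} {f w : E → ℝ}

lemma inv_neg_laplacian_eq {x : E} (hw : ContDiffAt ℝ 2 w x) (hpos : 0 < w x) (hf : 0 < f x)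
    (hΔ : Δ (w ^ 3) x = -f x) :
    0 < -Δ w x ∧ (-Δ w x)⁻¹ = 3 * (w x ^ 2 / (f x + 6 * ‖fderiv ℝ w x‖ ^ 2 * w x)) := by
  rw [laplacian_pow_three hw] at hΔ
  have hΔw : -Δ w x = (f x + 6 * ‖fderiv ℝ w x‖ ^ 2 * w x) / (3 * w x ^ 2) := by
    field_simp
    linarith
  rw [hΔw, inv_div, mul_div_assoc]
  exact ⟨by positivity, rfl⟩

lemma concavityFunction_nonpos_of_isLocalMax (hΩo : IsOpen Ω) (hw : ContDiffOn ℝ 2 w Ω)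
    (hwpos : ∀ x ∈ Ω, 0 < w x) (hf : ConcaveOn ℝ Ω f) (hfpos : ∀ x ∈ Ω, 0 < f x)
    (hΔ : ∀ x ∈ Ω, Δ (w ^ 3) x = -f x) {x y : E} (hx : x ∈ Ω) (hy : y ∈ Ω)
    (hmax : IsLocalMax (Function.uncurry (concavityFunction w)) (x, y)) :
    concavityFunction w x y ≤ 0 := by
  by_contra! hpos
  set z := midpoint ℝ x y with hz_def
  have hz : z ∈ Ω := hf.1.midpoint_mem hx hy
  have hC2 {p : E} (hp : p ∈ Ω) : ContDiffAt ℝ 2 w p := hw.contDiffAt (hΩo.mem_nhds hp)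
  have hdiff {p : E} (hp : p ∈ Ω) : DifferentiableAt ℝ w p := (hC2 hp).differentiableAt two_ne_zero
  have hgradx : fderiv ℝ w x = fderiv ℝ w z :=
    fderiv_eq_of_isLocalMax_concavityFunction (hdiff hx) (hdiff hz)
      (hmax.comp_continuous (g := fun p => (p, y)) (by fun_prop))
  have hgrady : fderiv ℝ w y = fderiv ℝ w z := by
    have hmax' : IsLocalMax (fun p => concavityFunction w p x) y := by
      simp only [concavityFunction_comm w _ x]
      exact hmax.comp_continuous (g := fun p => (x, p)) (by fun_prop)
    rw [hz_def, midpoint_comm]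
    exact fderiv_eq_of_isLocalMax_concavityFunction (hdiff hy)
      (by rw [midpoint_comm]; exact hdiff hz) hmax'
  obtain ⟨hnegx, hinvx⟩ := inv_neg_laplacian_eq (hC2 hx) (hwpos x hx) (hfpos x hx) (hΔ x hx)
  obtain ⟨hnegy, hinvy⟩ := inv_neg_laplacian_eq (hC2 hy) (hwpos y hy) (hfpos y hy) (hΔ y hy)
  obtain ⟨hnegz, hinvz⟩ := inv_neg_laplacian_eq (hC2 hz) (hwpos z hz) (hfpos z hz) (hΔ z hz)
  have hharmonic : ((-Δ w x)⁻¹ + (-Δ w y)⁻¹) / 2 ≤ (-Δ w z)⁻¹ :=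
    inv_add_inv_div_two_le_inv hnegx hnegy hnegz fun s t => by
      have := add_laplacian_le_of_isLocalMax_concavityFunction (hC2 hx) (hC2 hy) (hC2 hz) hmax s t
      linarith
  rw [hinvx, hinvy, hinvz, hgradx, hgrady] at hharmonic
  have hstrict := sq_div_lt_mean_sq_div (hwpos x hx) (hwpos y hy) (hwpos z hz) (hfpos x hx)
    (hfpos y hy) (P := 6 * ‖fderiv ℝ w z‖ ^ 2) (by positivity)
    (sub_nonpos.1 (concavityFunction_nonpos_of_concaveOn hf hx hy)) (sub_pos.1 hpos)
  linarith

end InteriorMaximum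

section BoundaryMaximum

variable {E : Type*} [NormedAddCommGroup E] [NormedSpace ℝ E] {Ω : Set E} {w : E → ℝ} {x y z : E}

lemma ball_lineMap_subset (hΩo : IsOpen Ω) (hΩ : Convex ℝ Ω) (hx : x ∈ closure Ω) {r t : ℝ}
    (hball : Metric.ball z r ⊆ Ω) (ht₀ : 0 < t) (ht₁ : t ≤ 1) :
    Metric.ball (AffineMap.lineMap x z t) (t * r) ⊆ Ω := by
  intro p hpt
  set p' : E := x + t⁻¹ • (p - x) with hp'_def
  have hp : p = (1 - t) • x + t • p' := by
    rw [hp'_def, smul_add, smul_inv_smul₀ ht₀.ne']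
    module
  have hsub : p - AffineMap.lineMap x z t = t • (p' - z) := by
    rw [hp, AffineMap.lineMap_apply_module]
    module
  rw [mem_ball_iff_norm, hsub, norm_smul, Real.norm_of_nonneg ht₀.le, mul_lt_mul_iff_right₀ ht₀,
    ← mem_ball_iff_norm] at hpt
  have hint := hΩ.combo_closure_interior_mem_interior hx (hΩo.interior_eq.symm ▸ hball hpt)
    (sub_nonneg.2 ht₁) ht₀ (sub_add_cancel 1 t)
  rwa [hΩo.interior_eq, ← hp] at hint

lemma eventually_mul_lt_of_mul_sq_le_pow_three {φ : ℝ → ℝ} {κ : ℝ} (hκ : 0 < κ)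
    (hφ : ∀ t ∈ Set.Ioo (0 : ℝ) 1, κ * t ^ 2 ≤ φ t ^ 3) (K : ℝ) :
    ∀ᶠ t in 𝓝[>] 0, K * t < φ t := by
  have hsmall : ∀ᶠ t in 𝓝[>] (0 : ℝ), K ^ 3 * t < κ := by
    have hlim : Tendsto (fun t : ℝ => K ^ 3 * t) (𝓝[>] 0) (𝓝 0) := by
      simpa using ((continuous_const_mul (K ^ 3)).tendsto (0 : ℝ)).mono_left nhdsWithin_le_nhds
    exact hlim.eventually_lt_const hκ
  filter_upwards [hsmall, Ioo_mem_nhdsGT one_pos] with t hKt ht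
  have hodd : Odd 3 := by decide
  rw [← hodd.strictMono_pow.lt_iff_lt]
  calc (K * t) ^ 3 = K ^ 3 * t * t ^ 2 := by ring
    _ < κ * t ^ 2 := by gcongr; exact pow_pos ht.1 2
    _ ≤ φ t ^ 3 := hφ t ht

/- Moving `x` by `t` towards the midpoint raises `w` at `x` by at least a multiple of `t ^ (2 / 3)`,
whereas `w` at the midpoint changes only by `O(t)`. -/
lemma not_isMaxOn_concavityFunction (hΩo : IsOpen Ω) (hΩ : Convex ℝ Ω) {c : ℝ} (hc : 0 < c)
    (hball : ∀ p r, 0 < r → Metric.ball p r ⊆ Ω → c * r ^ 2 ≤ w p ^ 3)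
    (hx : x ∈ closure Ω) (hwx : w x = 0) (hz : midpoint ℝ x y ∈ Ω)
    (hwz : DifferentiableAt ℝ w (midpoint ℝ x y)) :
    ¬ IsMaxOn (fun p => concavityFunction w p y) (closure Ω) x := by
  intro hmax
  set z := midpoint ℝ x y with hz_def
  set γ : ℝ → E := fun t => AffineMap.lineMap x z t with hγ_def
  obtain ⟨r, hr, hBr⟩ := Metric.isOpen_iff.1 hΩo z hz
  have hsub {t : ℝ} (ht : t ∈ Set.Ioo (0 : ℝ) 1) : Metric.ball (γ t) (t * r) ⊆ Ω :=
    ball_lineMap_subset hΩo hΩ hx hBr ht.1 ht.2.le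
  have hmid (t : ℝ) : midpoint ℝ (γ t) y = z + t • ((2⁻¹ : ℝ) • (z - x)) := by
    simp only [hγ_def, hz_def, AffineMap.lineMap_apply_module, midpoint_eq_smul_add, invOf_eq_inv]
    module
  obtain ⟨K, hK⟩ : ∃ K, ∀ᶠ t in 𝓝[>] (0 : ℝ), w (midpoint ℝ (γ t) y) - w z ≤ K * t := by
    have hd : DifferentiableAt ℝ (fun t : ℝ => w (z + t • ((2⁻¹ : ℝ) • (z - x)))) 0 :=
      DifferentiableAt.comp (0 : ℝ) (by simpa using hwz) (by fun_prop)
    obtain ⟨K, hK⟩ := hd.isBigO_sub.bound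
    refine ⟨K, ?_⟩
    filter_upwards [hK.filter_mono nhdsWithin_le_nhds, self_mem_nhdsWithin] with t ht ht₀
    simpa [hmid, abs_of_pos (Set.mem_Ioi.1 ht₀)] using (le_abs_self _).trans ht
  have hgrowth : ∀ᶠ t in 𝓝[>] (0 : ℝ), 2 * K * t < w (γ t) :=
    eventually_mul_lt_of_mul_sq_le_pow_three (κ := c * r ^ 2) (by positivity)
      (fun t ht => by
        have := hball _ _ (mul_pos ht.1 hr) (hsub ht)
        linarith) _
  obtain ⟨t, ⟨hKt, hgt⟩, ht⟩ :=
    ((hK.and hgrowth).and (Ioo_mem_nhdsGT one_pos)).exists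
  have hle : concavityFunction w (γ t) y ≤ concavityFunction w x y :=
    hmax (subset_closure (hsub ht (Metric.mem_ball_self (mul_pos ht.1 hr))))
  simp only [concavityFunction, hwx, ← hz_def] at hle
  linarith

end BoundaryMaximum

section ConcavityMaximumPrinciple

open InnerProductSpace Laplacian

lemma midpoint_mem_of_mem_of_mem_closure {V : Type*} [NormedAddCommGroup V] [NormedSpace ℝ V]
    {Ω : Set V} (hΩo : IsOpen Ω) (hΩ : Convex ℝ Ω) {x y : V} (hx : x ∈ Ω) (hy : y ∈ closure Ω) :
    midpoint ℝ x y ∈ Ω := by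
  rw [midpoint_eq_smul_add, invOf_eq_inv, smul_add, ← hΩo.interior_eq]
  exact hΩ.combo_interior_closure_mem_interior (hΩo.interior_eq.symm ▸ hx) hy (by norm_num)
    (by norm_num) (by norm_num)

lemma continuousOn_uncurry_concavityFunction {V : Type*} [NormedAddCommGroup V] [NormedSpace ℝ V]
    {Ω : Set V} {w : V → ℝ} (hΩ : Convex ℝ Ω) (hwc : ContinuousOn w (closure Ω)) :
    ContinuousOn (Function.uncurry (concavityFunction w)) (closure Ω ×ˢ closure Ω) := by
  have hmid : Continuous fun p : V × V => midpoint ℝ p.1 p.2 := by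
    simp only [midpoint_eq_smul_add]
    fun_prop
  have hfst := hwc.comp continuousOn_fst fun p (hp : p ∈ closure Ω ×ˢ closure Ω) => hp.1
  have hsnd := hwc.comp continuousOn_snd fun p (hp : p ∈ closure Ω ×ˢ closure Ω) => hp.2
  exact ((hfst.add hsnd).div_const 2).sub
    (hwc.comp hmid.continuousOn fun p hp => hΩ.closure.midpoint_mem hp.1 hp.2)

variable {E : Type*} [NormedAddCommGroup E] [InnerProductSpace ℝ E] [FiniteDimensional ℝ E]
  {Ω : Set E} {f w : E → ℝ}

theorem concavityFunction_nonpos (hΩo : IsOpen Ω) (hΩb : Bornology.IsBounded Ω)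
    (hwc : ContinuousOn w (closure Ω)) (hw : ContDiffOn ℝ 2 w Ω) (hwpos : ∀ x ∈ Ω, 0 < w x)
    (hwbd : ∀ x ∈ frontier Ω, w x = 0) (hf : ConcaveOn ℝ Ω f) (hfpos : ∀ x ∈ Ω, 0 < f x)
    (hΔ : ∀ x ∈ Ω, Δ (w ^ 3) x = -f x) {c : ℝ} (hc : 0 < c)
    (hball : ∀ p r, 0 < r → Metric.ball p r ⊆ Ω → c * r ^ 2 ≤ w p ^ 3) {x y : E}
    (hx : x ∈ closure Ω) (hy : y ∈ closure Ω) : concavityFunction w x y ≤ 0 := by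
  obtain ⟨⟨p, q⟩, ⟨hp, hq⟩, hmax⟩ :=
    (hΩb.isCompact_closure.prod hΩb.isCompact_closure).exists_isMaxOn ⟨(x, y), hx, hy⟩
      (continuousOn_uncurry_concavityFunction hf.1 hwc)
  refine le_trans (hmax (Set.mk_mem_prod hx hy)) ?_
  have hzero {u : E} (hu : u ∈ closure Ω) (hu' : u ∉ Ω) : w u = 0 :=
    hwbd u (hΩo.frontier_eq ▸ ⟨hu, hu'⟩)
  by_cases hz : midpoint ℝ p q ∈ Ω
  · have hwz : DifferentiableAt ℝ w (midpoint ℝ p q) :=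
      (hw.contDiffAt (hΩo.mem_nhds hz)).differentiableAt two_ne_zero
    have hpΩ : p ∈ Ω := by
      by_contra hpΩ
      exact not_isMaxOn_concavityFunction hΩo hf.1 hc hball hp (hzero hp hpΩ) hz hwz
        fun u hu => hmax (Set.mk_mem_prod hu hq)
    have hqΩ : q ∈ Ω := by
      by_contra hqΩ
      rw [midpoint_comm] at hz hwz
      refine not_isMaxOn_concavityFunction hΩo hf.1 hc hball hq (hzero hq hqΩ) hz hwz ?_
      simp only [concavityFunction_comm w _ p]
      exact fun u hu => hmax (Set.mk_mem_prod hp hu)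
    exact concavityFunction_nonpos_of_isLocalMax hΩo hw hwpos hf hfpos hΔ hpΩ hqΩ
      (hmax.isLocalMax (mem_of_superset ((hΩo.prod hΩo).mem_nhds ⟨hpΩ, hqΩ⟩)
        (Set.prod_mono subset_closure subset_closure)))
  · have hpΩ : p ∉ Ω := fun h => hz (midpoint_mem_of_mem_of_mem_closure hΩo hf.1 h hq)
    have hqΩ : q ∉ Ω := fun h =>
      hz (midpoint_comm (R := ℝ) p q ▸ midpoint_mem_of_mem_of_mem_closure hΩo hf.1 h hp)
    simp [concavityFunction, hzero hp hpΩ, hzero hq hqΩ,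
      hzero (hf.1.closure.midpoint_mem hp hq) hz]

end ConcavityMaximumPrinciple

section Analyticity

open InnerProductSpace Laplacian Module

lemma eventually_lineMap_ne_of_analyticOnNhd {V : Type*} [NormedAddCommGroup V] [NormedSpace ℝ V]
    {Ω : Set V} {f : V → ℝ} {b : ℝ} {x y : V} (hΩ : Convex ℝ Ω) (hΩb : Bornology.IsBounded Ω)
    (hfc : ContinuousOn f (closure Ω)) (hf : AnalyticOnNhd ℝ f Ω)
    (hbd : ∀ z ∈ frontier Ω, f z = b) (hx : x ∈ Ω) (hfx : f x ≠ b) (hxy : x ≠ y) :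
    ∀ᶠ t in 𝓝[≠] (0 : ℝ), f (AffineMap.lineMap x y t) ≠ f x := by
  by_contra hfreq
  simp only [not_eventually, not_not] at hfreq
  set γ : ℝ → V := fun t => AffineMap.lineMap x y t with hγ_def
  set S : Set ℝ := γ ⁻¹' Ω with hS_def
  have hγ : Continuous γ := AffineMap.lineMap_continuous
  have hγa : AnalyticOnNhd ℝ γ S := by
    simp only [hγ_def, AffineMap.lineMap_apply_module']
    exact fun t _ => by fun_prop
  have hS : Convex ℝ S := hΩ.affine_preimage (AffineMap.lineMap x y)
  have h0S : (0 : ℝ) ∈ S := by simpa [hS_def, hγ_def] using hx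
  have hconst : Set.EqOn (f ∘ γ) (fun _ => f x) S :=
    (hf.comp hγa fun _ ht => ht).eqOn_of_preconnected_of_frequently_eq analyticOnNhd_const
      hS.isPreconnected h0S hfreq
  obtain ⟨T, hT⟩ : (frontier S).Nonempty := by
    have hSb : Bornology.IsBounded S := (antilipschitzWith_lineMap hxy).isBounded_preimage hΩb
    refine nonempty_frontier_iff.2 ⟨⟨0, h0S⟩, fun hS => ?_⟩
    exact NormedSpace.unbounded_univ ℝ ℝ (hS ▸ hSb)
  have hTx : f (γ T) = f x :=
    hconst.of_subset_closure (hfc.comp hγ.continuousOn (hγ.closure_preimage_subset Ω))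
      continuousOn_const subset_closure subset_rfl (frontier_subset_closure hT)
  exact hfx (hTx.symm.trans (hbd _ (hγ.frontier_preimage_subset Ω hT)))

variable {E : Type*} [NormedAddCommGroup E] [InnerProductSpace ℝ E] [FiniteDimensional ℝ E]
  {f : E → ℝ} {x : E}

lemma analyticAt_of_harmonicAt (hE : finrank ℝ E = 2) (hf : HarmonicAt f x) :
    AnalyticAt ℝ f x := by
  let L : ℂ ≃ₗᵢ[ℝ] E := (stdOrthonormalBasis ℝ ℂ).equiv (stdOrthonormalBasis ℝ E)
    (finCongr (Complex.finrank_real_complex.trans hE.symm))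
  have hL : Tendsto L (𝓝 (L.symm x)) (𝓝 x) := L.continuous.tendsto' _ _ (L.apply_symm_apply x)
  have hharm : HarmonicAt (f ∘ L) (L.symm x) := by
    refine ⟨ContDiffAt.comp _ (by simpa using hf.1) L.contDiff.contDiffAt, ?_⟩
    filter_upwards [hL.eventually hf.2] with ζ hζ
    rw [laplacian_comp_linearIsometryEquiv]
    exact hζ
  have hcomp : (f ∘ L) ∘ L.symm = f := by
    ext y
    simp
  rw [← hcomp]
  exact (HarmonicAt.analyticAt hharm).comp
    ((L.symm.toContinuousLinearEquiv : E →L[ℝ] ℂ).analyticAt x)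

lemma analyticAt_of_laplacian_eq_const (hE : finrank ℝ E = 2) {c : ℝ} (hf : ContDiffAt ℝ 2 f x)
    (hΔ : ∀ᶠ y in 𝓝 x, Δ f y = c) : AnalyticAt ℝ f x := by
  set q : E → ℝ := fun y => ‖y‖ ^ 2
  have hq {n : WithTop ℕ∞} : ContDiff ℝ n q := contDiff_norm_sq ℝ
  have hcq {n : WithTop ℕ∞} : ContDiff ℝ n ((c / 4) • q) := contDiff_const.smul hq
  have hharm : HarmonicAt (f - (c / 4) • q) x := by
    refine ⟨hf.sub hcq.contDiffAt, ?_⟩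
    filter_upwards [hf.eventually (by simp), hΔ] with y hfy hΔy
    have hΔq : Δ q y = 4 := by
      have h := laplacian_norm_sub_sq 0 y
      simp only [sub_zero, hE] at h
      rw [h]
      norm_num
    rw [hfy.laplacian_sub hcq.contDiffAt, laplacian_smul _ hq.contDiffAt,
      hΔy, hΔq, smul_eq_mul, div_mul_cancel₀ _ four_ne_zero, sub_self, Pi.zero_apply]
  have hqa : AnalyticAt ℝ ((c / 4) • q) x := hcq.contDiffAt.analyticAt
  simpa using (analyticAt_of_harmonicAt hE hharm).add hqa

end Analyticity

open InnerProductSpace Laplacian Module in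
/-- Classical solutions of the Dirichlet problem `Δψ = f` in `Ω`, `ψ = 0` on `∂Ω`, continuous up to
the boundary; for `f = 1`, `-ψ` is the torsion function of `Ω` up to a constant factor. -/
structure IsDirichletSolution {E : Type*} [NormedAddCommGroup E] [InnerProductSpace ℝ E]
    [FiniteDimensional ℝ E] (Ω : Set E) (f ψ : E → ℝ) : Prop where
  continuousOn : ContinuousOn ψ (closure Ω)
  contDiffOn : ContDiffOn ℝ 2 ψ Ω
  laplacian_eq : ∀ x ∈ Ω, Δ ψ x = f x
  eq_zero : ∀ x ∈ frontier Ω, ψ x = 0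

namespace IsDirichletSolution

open InnerProductSpace Laplacian Module

variable {E : Type*} [NormedAddCommGroup E] [InnerProductSpace ℝ E] [FiniteDimensional ℝ E]
  {Ω : Set E} {f ψ : E → ℝ} {κ : ℝ}

lemma nonpos (h : IsDirichletSolution Ω f ψ) (hΩo : IsOpen Ω) (hΩb : Bornology.IsBounded Ω)
    (hf : ∀ x ∈ Ω, 0 < f x) {x : E} (hx : x ∈ closure Ω) : ψ x ≤ 0 :=
  le_of_laplacian_pos hΩo hΩb h.continuousOn h.contDiffOn
    (fun y hy => (hf y hy).trans_eq (h.laplacian_eq y hy).symm)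
    (fun y hy => (h.eq_zero y hy).le) x hx

lemma mul_sq_le_neg (h : IsDirichletSolution Ω f ψ) (hΩo : IsOpen Ω)
    (hΩb : Bornology.IsBounded Ω) (hκ : 0 < κ) (hf : ∀ x ∈ Ω, κ ≤ f x) {p : E} {r : ℝ}
    (hr : 0 < r) (hball : Metric.ball p r ⊆ Ω) :
    κ / (2 * (finrank ℝ E + 1)) * r ^ 2 ≤ -ψ p := by
  have hcball : Metric.closedBall p r ⊆ closure Ω :=
    closure_ball p hr.ne' ▸ closure_mono hball
  exact le_neg_of_le_neg <| le_neg_mul_sq_of_le_laplacian hκ hr (h.continuousOn.mono hcball)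
    (h.contDiffOn.mono hball) (fun y hy => (h.laplacian_eq y (hball hy)).symm ▸ hf y (hball hy))
    fun y hy => h.nonpos hΩo hΩb (fun x hx => hκ.trans_le (hf x hx))
      (hcball (Metric.sphere_subset_closedBall hy))

lemma neg (h : IsDirichletSolution Ω f ψ) (hΩo : IsOpen Ω) (hΩb : Bornology.IsBounded Ω)
    (hκ : 0 < κ) (hf : ∀ x ∈ Ω, κ ≤ f x) {x : E} (hx : x ∈ Ω) : ψ x < 0 := by
  obtain ⟨r, hr, hball⟩ := Metric.isOpen_iff.1 hΩo x hx
  have hbound := h.mul_sq_le_neg hΩo hΩb hκ hf hr hball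
  have hpos : 0 < κ / (2 * (finrank ℝ E + 1)) * r ^ 2 := by positivity
  linarith

/- The exponent `1 / 3` is small enough for infinite slope at every boundary point, corners
included, and large enough for the concavity maximum principle. -/
theorem concavityFunction_rpow_nonpos (h : IsDirichletSolution Ω f ψ) (hΩo : IsOpen Ω)
    (hΩb : Bornology.IsBounded Ω) (hfc : ConcaveOn ℝ Ω f) (hκ : 0 < κ) (hf : ∀ x ∈ Ω, κ ≤ f x)
    {x y : E} (hx : x ∈ closure Ω) (hy : y ∈ closure Ω) :
    concavityFunction (fun p => (-ψ p) ^ (3⁻¹ : ℝ)) x y ≤ 0 := by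
  set w : E → ℝ := fun p => (-ψ p) ^ (3⁻¹ : ℝ)
  have hfpos (p : E) (hp : p ∈ Ω) : 0 < f p := hκ.trans_le (hf p hp)
  have hneg (p : E) (hp : p ∈ Ω) : 0 < -ψ p := neg_pos.2 (h.neg hΩo hΩb hκ hf hp)
  have hcube {p : E} (hp : p ∈ closure Ω) : w p ^ 3 = -ψ p := by
    exact_mod_cast Real.rpow_inv_natCast_pow (neg_nonneg.2 (h.nonpos hΩo hΩb hfpos hp))
      three_ne_zero
  refine concavityFunction_nonpos (w := w) hΩo hΩb
    (h.continuousOn.neg.rpow_const fun _ _ => Or.inr (by norm_num))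
    (h.contDiffOn.neg.rpow_const_of_ne fun p hp => (hneg p hp).ne')
    (fun p hp => Real.rpow_pos_of_pos (hneg p hp) _)
    (fun p hp => by simp [w, h.eq_zero p hp]) hfc hfpos (fun p hp => ?_)
    (by positivity : 0 < κ / (2 * (finrank ℝ E + 1))) (fun p r hr hball => ?_) hx hy
  · have hloc : w ^ 3 =ᶠ[𝓝 p] -ψ :=
      eventually_of_mem (hΩo.mem_nhds hp) fun q hq => hcube (subset_closure hq)
    rw [(laplacian_congr_nhds hloc).self_of_nhds, laplacian_neg, Pi.neg_apply, h.laplacian_eq p hp]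
  · rw [hcube (subset_closure (hball (Metric.mem_ball_self hr)))]
    exact h.mul_sq_le_neg hΩo hΩb hκ hf hr hball

lemma map_midpoint_le_max (h : IsDirichletSolution Ω f ψ) (hΩo : IsOpen Ω)
    (hΩb : Bornology.IsBounded Ω) (hfc : ConcaveOn ℝ Ω f) (hκ : 0 < κ) (hf : ∀ x ∈ Ω, κ ≤ f x)
    {x y : E} (hx : x ∈ closure Ω) (hy : y ∈ closure Ω) :
    ψ (midpoint ℝ x y) ≤ max (ψ x) (ψ y) := by
  have hz : 0 ≤ -ψ (midpoint ℝ x y) := neg_nonneg.2 <|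
    h.nonpos hΩo hΩb (fun p hp => hκ.trans_le (hf p hp)) (hfc.1.closure.midpoint_mem hx hy)
  by_contra! hlt
  obtain ⟨hltx, hlty⟩ := max_lt_iff.1 hlt
  have hwx := Real.rpow_lt_rpow hz (neg_lt_neg hltx) (inv_pos.2 (zero_lt_three' ℝ))
  have hwy := Real.rpow_lt_rpow hz (neg_lt_neg hlty) (inv_pos.2 (zero_lt_three' ℝ))
  have hconc := h.concavityFunction_rpow_nonpos hΩo hΩb hfc hκ hf hx hy
  rw [concavityFunction] at hconc
  linarith

lemma exists_mem_isMinOn (h : IsDirichletSolution Ω f ψ) (hΩo : IsOpen Ω) (hΩne : Ω.Nonempty)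
    (hΩb : Bornology.IsBounded Ω) (hκ : 0 < κ) (hf : ∀ x ∈ Ω, κ ≤ f x) :
    ∃ m ∈ Ω, IsMinOn ψ Ω m := by
  obtain ⟨m, hm, hmin⟩ := hΩb.isCompact_closure.exists_isMinOn hΩne.closure h.continuousOn
  refine ⟨m, by_contra fun hmΩ => ?_, hmin.on_subset subset_closure⟩
  obtain ⟨p, hp⟩ := hΩne
  have hmp : ψ m ≤ ψ p := hmin (subset_closure hp)
  rw [h.eq_zero m (hΩo.frontier_eq ▸ ⟨hm, hmΩ⟩)] at hmp
  exact hmp.not_gt (h.neg hΩo hΩb hκ hf hp)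

theorem eq_of_isMinOn (h : IsDirichletSolution Ω f ψ) (hΩo : IsOpen Ω)
    (hΩb : Bornology.IsBounded Ω) (hfc : ConcaveOn ℝ Ω f) (hκ : 0 < κ) (hf : ∀ x ∈ Ω, κ ≤ f x)
    (hψ : AnalyticOnNhd ℝ ψ Ω) {x y : E} (hx : x ∈ Ω) (hy : y ∈ Ω) (hxmin : IsMinOn ψ Ω x)
    (hymin : IsMinOn ψ Ω y) : x = y := by
  by_contra hxy
  set u : ℕ → ℝ := fun n => 2⁻¹ ^ n with hu_def
  have hu : Tendsto u atTop (𝓝[≠] 0) := tendsto_nhdsWithin_iff.2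
    ⟨tendsto_pow_atTop_nhds_zero_of_lt_one (by norm_num) (by norm_num),
      Eventually.of_forall fun n => pow_ne_zero n (by norm_num)⟩
  have hmin (n : ℕ) : AffineMap.lineMap x y (u n) ∈ Ω ∧ ψ (AffineMap.lineMap x y (u n)) = ψ x := by
    induction n with
    | zero => simpa [hu_def] using ⟨hy, (hymin hx).antisymm (hxmin hy)⟩
    | succ n ih =>
      have hmid : AffineMap.lineMap x y (u (n + 1)) =
          midpoint ℝ x (AffineMap.lineMap x y (u n)) := by
        simp only [hu_def, pow_succ, midpoint_eq_smul_add, invOf_eq_inv,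
          AffineMap.lineMap_apply_module]
        module
      have hmem := hfc.1.midpoint_mem hx ih.1
      have hle := h.map_midpoint_le_max hΩo hΩb hfc hκ hf (subset_closure hx) (subset_closure ih.1)
      rw [ih.2, max_self] at hle
      exact hmid ▸ ⟨hmem, hle.antisymm (hxmin hmem)⟩
  have hne := hu.eventually <| eventually_lineMap_ne_of_analyticOnNhd hfc.1 hΩb h.continuousOn hψ
    h.eq_zero hx (h.neg hΩo hΩb hκ hf hx).ne hxy
  obtain ⟨n, hn⟩ := hne.exists
  exact hn (hmin n).2

end IsDirichletSolution

section Plane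

open InnerProductSpace Laplacian Module

lemma lapl_eq_laplacian {f : E2 → ℝ} {x : E2} (hf : ContDiffAt ℝ 2 f x) : lapl f x = Δ f x := by
  have hpd (i : Fin 2) (v : E2) :
      fderiv ℝ (pdR i f) x v = fderiv ℝ (fderiv ℝ f) x v (EuclideanSpace.single i 1) := by
    change fderiv ℝ (fun y => fderiv ℝ f y (EuclideanSpace.single i 1)) x v = _
    rw [fderiv_clm_apply (differentiableAt_fderiv hf) (differentiableAt_const _)]
    simp
  rw [laplacian_eq_sum_fderiv_fderiv (EuclideanSpace.basisFun (Fin 2) ℝ), Fin.sum_univ_two,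
    EuclideanSpace.basisFun_apply, EuclideanSpace.basisFun_apply, ← hpd, ← hpd]
  rfl

lemma isDirichletSolution_of_lapl_eq {Ω : Set E2} {f ψ : E2 → ℝ} (hΩo : IsOpen Ω)
    (hψc : ContinuousOn ψ (closure Ω)) (hψ : ContDiffOn ℝ 2 ψ Ω) (hΔ : ∀ x ∈ Ω, lapl ψ x = f x)
    (hbd : ∀ x ∈ frontier Ω, ψ x = 0) : IsDirichletSolution Ω f ψ where
  continuousOn := hψc
  contDiffOn := hψ
  laplacian_eq x hx :=
    (lapl_eq_laplacian (hψ.contDiffAt (hΩo.mem_nhds hx))).symm.trans (hΔ x hx)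
  eq_zero := hbd

theorem stmt19_general {E : Type*} [NormedAddCommGroup E] [InnerProductSpace ℝ E]
    [FiniteDimensional ℝ E] (hE : finrank ℝ E = 2) {Ω : Set E} (hΩo : IsOpen Ω)
    (hΩne : Ω.Nonempty) (hΩb : Bornology.IsBounded Ω) (hΩ : Convex ℝ Ω) {c : ℝ} (hc : 0 < c)
    {ψ : E → ℝ} (hψ : IsDirichletSolution Ω (fun _ => c) ψ) :
    ∃! x₀, x₀ ∈ Ω ∧ ψ x₀ = sInf (ψ '' Ω) := by
  have hc_le : ∀ x ∈ Ω, c ≤ (fun _ => c) x := fun _ _ => le_rfl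
  have hψa : AnalyticOnNhd ℝ ψ Ω := fun x hx =>
    analyticAt_of_laplacian_eq_const hE (hψ.contDiffOn.contDiffAt (hΩo.mem_nhds hx))
      (eventually_of_mem (hΩo.mem_nhds hx) hψ.laplacian_eq)
  obtain ⟨m, hm, hmin⟩ := hψ.exists_mem_isMinOn hΩo hΩne hΩb hc hc_le
  have hinf : sInf (ψ '' Ω) = ψ m :=
    IsLeast.csInf_eq ⟨Set.mem_image_of_mem ψ hm, Set.forall_mem_image.2 fun _ hp => hmin hp⟩
  rw [hinf]
  refine ⟨m, ⟨hm, rfl⟩, fun y hy => ?_⟩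
  have hymin : IsMinOn ψ Ω y := fun p hp => hy.2.trans_le (hmin hp)
  exact hψ.eq_of_isMinOn hΩo hΩb (concaveOn_const c hΩ) hc hc_le hψa hy.1 hm hymin hmin

end Plane

/-- Kawohl: if `Ω` is bounded, open and strictly convex (the open segment
between any two distinct points of `closure Ω` lies in `Ω`), `Δψ = 1` in `Ω` and `ψ = 0` on
`∂Ω`, then `ψ` attains its infimum over `Ω` at a unique point of `Ω`. -/
theorem stmt19 (Ω : Set E2) (hΩo : IsOpen Ω) (hΩne : Ω.Nonempty)
    (hΩb : Bornology.IsBounded Ω)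
    (hconv : ∀ x ∈ closure Ω, ∀ y ∈ closure Ω, x ≠ y → openSegment ℝ x y ⊆ Ω)
    (ψ : E2 → ℝ)
    (hψc : ContinuousOn ψ (closure Ω))
    (hψsm : ContDiffOn ℝ (⊤ : ℕ∞) ψ Ω)
    (hΔ : ∀ x ∈ Ω, lapl ψ x = 1)
    (hbd : ∀ x ∈ frontier Ω, ψ x = 0) :
    ∃! x₀ : E2, x₀ ∈ Ω ∧ ψ x₀ = sInf (ψ '' Ω) := by
  have hΩ : Convex ℝ Ω := convex_iff_pairwise_pos.2 fun x hx y hy hxy a b ha hb hab =>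
    hconv x (subset_closure hx) y (subset_closure hy) hxy ⟨a, b, ha, hb, hab, rfl⟩
  exact stmt19_general finrank_euclideanSpace_fin hΩo hΩne hΩb hΩ one_pos
    (isDirichletSolution_of_lapl_eq hΩo hψc (contDiffOn_infty.1 hψsm 2) hΔ hbd)
end
end
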